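/- arXiv:1602.02971 — 5 statements merged into one kernel-verified Lean document; each statement's English description precedes it below -/
import Mathlib

section
/- Let μ be a strictly non-degenerate, finitely supported probability measure on F̃ (Thompson's group F realized as a group of piecewise linear homeomorphisms of ℝ). Then the random walk (F̃, μ) is not Liouville: there exists a bounded, non-constant μ-harmonic function f : F̃ → ℝ. -/
noncomputable section

/-- The generator `Ã : γ ↦ γ - 1` as a permutation of `ℝ`. -/
def Atil : Equiv.Perm ℝ := Equiv.subRight (1 : ℝ)

/-- The underlying function of the generator `B̃`. -/
def Bfun : ℝ → ℝ := fun x => if x ≤ 0 then x else if x ≤ 2 then x / 2 else x - 1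

/-- The underlying function of `B̃⁻¹`. -/
def Binvfun : ℝ → ℝ := fun x => if x ≤ 0 then x else if x ≤ 1 then 2 * x else x + 1

/-- The generator `B̃` as a permutation of `ℝ`. -/
def Btil : Equiv.Perm ℝ where
  toFun := Bfun
  invFun := Binvfun
  left_inv := by
    intro x
    simp only [Bfun, Binvfun]
    split_ifs <;> linarith
  right_inv := by
    intro x
    simp only [Bfun, Binvfun]
    split_ifs <;> linarith

/-- Thompson's group `F` realized as the subgroup `F̃` of piecewise-linear homeomorphisms of `ℝ`
generated by `Ã` and `B̃`.  The multiplication of `Equiv.Perm ℝ` is `(f * g) x = f (g x)`;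
the paper's group operation is `(g₁ g₂)(γ) = g₂(g₁(γ))`, i.e. the paper's product `g₁·g₂`
corresponds to `g₂ * g₁` here.  As a *set* of permutations, `F̃` is the same for either
convention. -/
def Ftil : Subgroup (Equiv.Perm ℝ) := Subgroup.closure {Atil, Btil}

/-!
A random walk on `F̃` induces a walk on `ℝ`. The elements `B̃` and `Ã⁻¹ B̃` map the interval
`(0, 2)` to disjoint subintervals, so the Dirichlet form of the walk dominates the `ℓ²` norm on
`(0, 2)`. Consequently the expected number of visits to the finite set of break points of the
steps is finite, and it is square summable as a function of the starting point in `(0, 2)`;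
hence it is less than `1 / 2` from some `v = 2⁻ᵏ`.

Follow the differentiability of `g` at `v` along the walk on `F̃`. By the chain rule it changes
at a step only if `g v` is a break point of that step, so it stabilizes almost surely. The
probability `f` that the walk from `g` ends up differentiable at `v` is a harmonic function; for
`g v = v` it exceeds `1 / 2` if `g` is smooth at `v`, and it is less than `1 / 2` if `g` has a
break at `v`. The identity is of the former kind. One of the latter kind is a conjugate of `B̃`,
because `B̃` fixes its break point `0`, which is carried to `2⁻ᵏ` by an element smooth at `0`.
-/

open Filter Function Topology
open scoped Pointwise

section Displacement

variable {G X : Type*} [Group G] [MulAction G X] {u : X → ℝ} {g h : G}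

/-- The squared `ℓ²` distance between `u` and its translate `x ↦ u (g • x)`. It has the junk value
`0` when the series diverges, so it is only used for `u` of finite support. -/
def displacement (g : G) (u : X → ℝ) : ℝ := ∑' x, (u x - u (g • x)) ^ 2

lemma displacement_nonneg (g : G) (u : X → ℝ) : 0 ≤ displacement g u :=
  tsum_nonneg fun _ ↦ sq_nonneg _

lemma displacement_one (u : X → ℝ) : displacement (1 : G) u = 0 := by
  simp [displacement]

lemma tsum_comp_smul (g : G) (f : X → ℝ) : ∑' x, f (g • x) = ∑' x, f x :=
  (MulAction.toPerm g).tsum_eq f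

lemma displacement_inv (g : G) (u : X → ℝ) : displacement g⁻¹ u = displacement g u := by
  rw [displacement, ← tsum_comp_smul g]
  exact tsum_congr fun x ↦ by rw [inv_smul_smul]; ring

lemma hasFiniteSupport_comp_smul (hu : u.HasFiniteSupport) (g : G) :
    HasFiniteSupport fun x ↦ u (g • x) :=
  hu.fun_comp_of_injective (MulAction.injective g)

lemma summable_sq_of_hasFiniteSupport {α : Type*} {f : α → ℝ} (hf : f.HasFiniteSupport) :
    Summable fun x ↦ f x ^ 2 := by
  simpa only [sq] using summable_of_hasFiniteSupport (hf.fun_mul_left f)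

lemma summable_sub_comp_smul_sq (hu : u.HasFiniteSupport) (g : G) :
    Summable fun x ↦ (u x - u (g • x)) ^ 2 :=
  summable_sq_of_hasFiniteSupport (hu.fun_sub (hasFiniteSupport_comp_smul hu g))

lemma displacement_mul_le (hu : u.HasFiniteSupport) (g h : G) :
    displacement (g * h) u ≤ 2 * displacement g u + 2 * displacement h u := by
  have hg : Summable fun x ↦ (u (h • x) - u (g • h • x)) ^ 2 :=
    (summable_sub_comp_smul_sq hu g).comp_injective (MulAction.injective h)
  have hh := summable_sub_comp_smul_sq hu h
  calc displacement (g * h) u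
      ≤ ∑' x, (2 * (u (h • x) - u (g • h • x)) ^ 2 + 2 * (u x - u (h • x)) ^ 2) :=
        (summable_sub_comp_smul_sq hu _).tsum_le_tsum
          (fun x ↦ by
            rw [mul_smul]
            nlinarith [sq_nonneg ((u (h • x) - u (g • h • x)) - (u x - u (h • x)))])
          ((hg.mul_left 2).add (hh.mul_left 2))
    _ = 2 * displacement g u + 2 * displacement h u := by
        rw [(hg.mul_left 2).tsum_add (hh.mul_left 2), tsum_mul_left, tsum_mul_left,
          tsum_comp_smul h fun x ↦ (u x - u (g • x)) ^ 2, displacement, displacement]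

lemma tsum_mul_self_sub_comp_smul (hu : u.HasFiniteSupport) (g : G) :
    ∑' x, u x * (u x - u (g • x)) = displacement g u / 2 := by
  have hsq := summable_sq_of_hasFiniteSupport hu
  have hgsq := summable_sq_of_hasFiniteSupport (hasFiniteSupport_comp_smul hu g)
  calc ∑' x, u x * (u x - u (g • x))
      = ∑' x, ((u x - u (g • x)) ^ 2 + (u x ^ 2 - u (g • x) ^ 2)) / 2 :=
        tsum_congr fun x ↦ by ring
    _ = displacement g u / 2 := by
        rw [tsum_div_const, (summable_sub_comp_smul_sq hu g).tsum_add (hsq.sub hgsq),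
          hsq.tsum_sub hgsq, tsum_comp_smul g fun x ↦ u x ^ 2, sub_self, add_zero, displacement]

lemma tsum_subtype_mono {α : Type*} {f : α → ℝ} {s t : Set α} (hf : Summable f) (hf₀ : 0 ≤ f)
    (hst : s ⊆ t) : ∑' x : s, f x ≤ ∑' x : t, f x :=
  (hf.subtype s).tsum_le_tsum_of_inj (Set.inclusion hst) (Set.inclusion_injective hst)
    (fun _ _ ↦ hf₀ _) (fun _ ↦ le_rfl) (hf.subtype t)

lemma tsum_smul_sq_add_le {T : Set X} (hu : u.HasFiniteSupport)
    (hg : g • T ⊆ T) (hh : h • T ⊆ T) (hgh : Disjoint (g • T) (h • T)) :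
    ∑' x : T, u (g • (x : X)) ^ 2 + ∑' x : T, u (h • (x : X)) ^ 2 ≤ ∑' x : T, u x ^ 2 := by
  have hsq := summable_sq_of_hasFiniteSupport hu
  calc ∑' x : T, u (g • (x : X)) ^ 2 + ∑' x : T, u (h • (x : X)) ^ 2
      = ∑' x : ↑(g • T ∪ h • T), u x ^ 2 := by
        rw [Summable.tsum_union_disjoint hgh (hsq.subtype _) (hsq.subtype _),
          ← Set.image_smul, ← Set.image_smul,
          tsum_image (fun x ↦ u x ^ 2) (MulAction.injective g).injOn,
          tsum_image (fun x ↦ u x ^ 2) (MulAction.injective h).injOn]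
    _ ≤ ∑' x : T, u x ^ 2 :=
        tsum_subtype_mono hsq (fun _ ↦ sq_nonneg _) (Set.union_subset hg hh)

lemma tsum_sq_le_tsum_smul_sq_add_displacement (T : Set X) (hu : u.HasFiniteSupport) (g : G) :
    ∑' x : T, u x ^ 2 ≤ 3 / 2 * ∑' x : T, u (g • (x : X)) ^ 2 + 3 * displacement g u := by
  have hsq : Summable fun x : T ↦ u x ^ 2 := (summable_sq_of_hasFiniteSupport hu).subtype T
  have hgsq : Summable fun x : T ↦ u (g • (x : X)) ^ 2 :=
    (summable_sq_of_hasFiniteSupport (hasFiniteSupport_comp_smul hu g)).subtype T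
  have hsub := summable_sub_comp_smul_sq hu g
  have hsubT : Summable fun x : T ↦ (u x - u (g • (x : X))) ^ 2 := hsub.subtype T
  calc ∑' x : T, u x ^ 2
      ≤ ∑' x : T, (3 / 2 * u (g • (x : X)) ^ 2 + 3 * (u x - u (g • (x : X))) ^ 2) :=
        hsq.tsum_le_tsum (fun x ↦ by nlinarith [sq_nonneg (3 * u (g • (x : X)) - 2 * u x)])
          ((hgsq.mul_left _).add (hsubT.mul_left _))
    _ = 3 / 2 * ∑' x : T, u (g • (x : X)) ^ 2 + 3 * ∑' x : T, (u x - u (g • (x : X))) ^ 2 := by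
        rw [(hgsq.mul_left _).tsum_add (hsubT.mul_left _), tsum_mul_left, tsum_mul_left]
    _ ≤ 3 / 2 * ∑' x : T, u (g • (x : X)) ^ 2 + 3 * displacement g u := by
        gcongr
        exact hsub.tsum_subtype_le _ T fun _ ↦ sq_nonneg _

-- A function that barely moves under `g` and `h` has about the same `ℓ²` mass on `g • T` and on
-- `h • T` as on `T`, although these are disjoint subsets of `T`.
lemma tsum_sq_le_displacement_add_displacement {T : Set X} (hu : u.HasFiniteSupport)
    (hg : g • T ⊆ T) (hh : h • T ⊆ T) (hgh : Disjoint (g • T) (h • T)) :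
    ∑' x : T, u x ^ 2 ≤ 6 * (displacement g u + displacement h u) := by
  linarith [tsum_sq_le_tsum_smul_sq_add_displacement T hu g,
    tsum_sq_le_tsum_smul_sq_add_displacement T hu h, tsum_smul_sq_add_le hu hg hh hgh]

end Displacement

section Markov

variable {G X Y : Type*} [Group G] [MulAction G X] [MulAction G Y] {w : G →₀ ℝ} {u v : X → ℝ}

/-- The Markov operator of the random walk on a `G`-set whose steps are distributed according to the
weights `w`. On `G` itself, with the action by left multiplication, its fixed points are the
`w`-harmonic functions. -/
def markov (w : G →₀ ℝ) : Module.End ℝ (X → ℝ) :=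
  w.sum fun g c ↦ c • LinearMap.funLeft ℝ ℝ (g • ·)

lemma markov_apply (w : G →₀ ℝ) (u : X → ℝ) (x : X) :
    markov w u x = ∑ g ∈ w.support, w g * u (g • x) := by
  simp [markov, Finsupp.sum, LinearMap.sum_apply, LinearMap.funLeft_apply]

lemma markov_sub_self_apply (hw₁ : ∑ g ∈ w.support, w g = 1) (u : X → ℝ) (x : X) :
    markov w u x - u x = ∑ g ∈ w.support, w g * (u (g • x) - u x) := by
  simp only [mul_sub, Finset.sum_sub_distrib, ← Finset.sum_mul, hw₁, one_mul, markov_apply]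

lemma markov_const (hw₁ : ∑ g ∈ w.support, w g = 1) (c : ℝ) :
    markov w (fun _ : X ↦ c) = fun _ ↦ c := by
  ext x
  rw [markov_apply, ← Finset.sum_mul, hw₁, one_mul]

lemma abs_markov_le (hw₀ : 0 ≤ w) (huv : ∀ x, |u x| ≤ v x) (x : X) :
    |markov w u x| ≤ markov w v x := by
  simp only [markov_apply]
  refine (Finset.abs_sum_le_sum_abs _ _).trans (Finset.sum_le_sum fun g _ ↦ ?_)
  rw [abs_mul, abs_of_nonneg (hw₀ g)]
  exact mul_le_mul_of_nonneg_left (huv _) (hw₀ g)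

lemma abs_markov_pow_le (hw₀ : 0 ≤ w) (huv : ∀ x, |u x| ≤ v x) (n : ℕ) (x : X) :
    |(markov w ^ n) u x| ≤ (markov w ^ n) v x := by
  induction n generalizing x with
  | zero => exact huv x
  | succ n ih =>
    simp only [pow_succ', Module.End.mul_apply]
    exact abs_markov_le hw₀ ih x

lemma markov_pow_nonneg (hw₀ : 0 ≤ w) (hu : 0 ≤ u) (n : ℕ) : 0 ≤ (markov w ^ n) u := fun x ↦
  (abs_nonneg _).trans (abs_markov_pow_le hw₀ (fun y ↦ (abs_of_nonneg (hu y)).le) n x)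

lemma abs_markov_pow_le_const (hw₀ : 0 ≤ w) (hw₁ : ∑ g ∈ w.support, w g = 1) {c : ℝ}
    (hu : ∀ x, |u x| ≤ c) (n : ℕ) (x : X) : |(markov w ^ n) u x| ≤ c := by
  have hconst : (markov w ^ n) (fun _ : X ↦ c) = fun _ ↦ c := by
    rw [Module.End.pow_apply]
    exact iterate_fixed (markov_const hw₁ c) n
  simpa only [hconst] using abs_markov_pow_le hw₀ hu n x

lemma markov_pow_comp (w : G →₀ ℝ) (u : X → ℝ) (π : Y →[G] X) (n : ℕ) :
    (markov w ^ n) (u ∘ π) = (markov w ^ n) u ∘ π := by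
  induction n with
  | zero => rfl
  | succ n ih =>
    ext y
    simp only [pow_succ', Module.End.mul_apply, ih, markov_apply, comp_apply, map_smul]

lemma hasFiniteSupport_markov (w : G →₀ ℝ) (hu : u.HasFiniteSupport) :
    (markov w u).HasFiniteSupport := by
  simp only [funext (markov_apply w u)]
  exact HasFiniteSupport.sum
    (fun g ↦ (hasFiniteSupport_comp_smul hu g).fun_mul_right _) w.support

lemma hasFiniteSupport_markov_pow (w : G →₀ ℝ) (hu : u.HasFiniteSupport) (n : ℕ) :
    ((markov w ^ n) u).HasFiniteSupport := by
  induction n with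
  | zero => exact hu
  | succ n ih =>
    rw [pow_succ', Module.End.mul_apply]
    exact hasFiniteSupport_markov w ih

end Markov

section Energy

variable {G X : Type*} [Group G] [MulAction G X] {w : G →₀ ℝ} {u : X → ℝ} {g : G}

/-- Twice the Dirichlet form of the random walk with step weights `w`. -/
def energy (w : G →₀ ℝ) (u : X → ℝ) : ℝ := ∑ g ∈ w.support, w g * displacement g u

lemma energy_nonneg (hw₀ : 0 ≤ w) (u : X → ℝ) : 0 ≤ energy w u :=
  Finset.sum_nonneg fun g _ ↦ mul_nonneg (hw₀ g) (displacement_nonneg g u)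

lemma tsum_mul_self_sub_markov (hw₁ : ∑ g ∈ w.support, w g = 1) (hu : u.HasFiniteSupport) :
    ∑' x, u x * (u x - markov w u x) = energy w u / 2 := by
  have expand (x : X) : u x * (u x - markov w u x) =
      ∑ g ∈ w.support, w g * (u x * (u x - u (g • x))) := by
    rw [← neg_sub, markov_sub_self_apply hw₁, ← Finset.sum_neg_distrib, Finset.mul_sum]
    exact Finset.sum_congr rfl fun g _ ↦ by ring
  simp only [expand]
  rw [Summable.tsum_finsetSum fun g _ ↦
    (summable_of_hasFiniteSupport (hu.fun_mul_left _)).mul_left (w g)]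
  simp only [tsum_mul_left, tsum_mul_self_sub_comp_smul hu, energy, Finset.sum_div, mul_div_assoc]

lemma exists_displacement_le_energy (hw₀ : 0 ≤ w)
    (hg : g ∈ Subgroup.closure (w.support : Set G)) :
    ∃ C, 0 ≤ C ∧ ∀ u : X → ℝ, u.HasFiniteSupport → displacement g u ≤ C * energy w u := by
  induction hg using Subgroup.closure_induction with
  | mem g hg =>
    have hg₀ : 0 < w g := (hw₀ g).lt_of_ne' (Finsupp.mem_support_iff.1 hg)
    refine ⟨(w g)⁻¹, inv_nonneg.2 hg₀.le, fun u _ ↦ ?_⟩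
    rw [← div_eq_inv_mul, le_div_iff₀' hg₀]
    exact Finset.single_le_sum (f := fun h ↦ w h * displacement h u)
      (fun h _ ↦ mul_nonneg (hw₀ h) (displacement_nonneg h u)) hg
  | one => exact ⟨0, le_rfl, fun u _ ↦ by rw [displacement_one, zero_mul]⟩
  | mul g h _ _ ihg ihh =>
    obtain ⟨C, hC₀, hC⟩ := ihg
    obtain ⟨D, hD₀, hD⟩ := ihh
    refine ⟨2 * C + 2 * D, by positivity, fun u hu ↦ ?_⟩
    linarith [displacement_mul_le hu g h, hC u hu, hD u hu]
  | inv g _ ih => simpa only [displacement_inv] using ih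

/-- The Dirichlet form of the walk with weights `w` controls the `ℓ²` norm on `T` of finitely
supported functions. For a single point this is a form of transience. -/
def EnergyDominates (w : G →₀ ℝ) (T : Set X) : Prop :=
  ∃ C, 0 ≤ C ∧ ∀ u : X → ℝ, u.HasFiniteSupport → ∑' x : T, u x ^ 2 ≤ C * energy w u

variable {T T' : Set X}

lemma EnergyDominates.mono (hT : EnergyDominates w T) (h : T' ⊆ T) : EnergyDominates w T' := by
  obtain ⟨C, hC₀, hC⟩ := hT
  exact ⟨C, hC₀, fun u hu ↦ (tsum_subtype_mono (summable_sq_of_hasFiniteSupport hu)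
    (fun _ ↦ sq_nonneg _) h).trans (hC u hu)⟩

lemma energyDominates_of_finite (hT : T.Finite) (h : ∀ x ∈ T, EnergyDominates w {x}) :
    EnergyDominates w T := by
  lift T to Finset X using hT
  choose! C hC₀ hC using h
  refine ⟨∑ x ∈ T, C x, Finset.sum_nonneg hC₀, fun u hu ↦ ?_⟩
  rw [Finset.tsum_subtype' T fun x ↦ u x ^ 2, Finset.sum_mul]
  refine Finset.sum_le_sum fun x hx ↦ ?_
  simpa only [tsum_singleton x fun x ↦ u x ^ 2] using hC x hx u hu

lemma EnergyDominates.singleton_of_smul_mem {x : X} (hT : EnergyDominates w T) (hw₀ : 0 ≤ w)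
    (hg : g ∈ Subgroup.closure (w.support : Set G)) (hx : g • x ∈ T) :
    EnergyDominates w {x} := by
  obtain ⟨C, hC₀, hC⟩ := hT.mono (Set.singleton_subset_iff.2 hx)
  obtain ⟨D, hD₀, hD⟩ := exists_displacement_le_energy (X := X) hw₀ hg
  refine ⟨2 * C + 2 * D, by positivity, fun u hu ↦ ?_⟩
  have hend := hC u hu
  have hmove : (u x - u (g • x)) ^ 2 ≤ displacement g u :=
    (summable_sub_comp_smul_sq hu g).le_tsum x fun _ _ ↦ sq_nonneg _
  rw [tsum_singleton _ fun x ↦ u x ^ 2] at hend ⊢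
  nlinarith [hD u hu, sq_nonneg (u x - 2 * u (g • x))]

lemma energyDominates_of_disjoint_smul {g h : G} (hw₀ : 0 ≤ w)
    (hg : g ∈ Subgroup.closure (w.support : Set G)) (hh : h ∈ Subgroup.closure (w.support : Set G))
    (hgT : g • T ⊆ T) (hhT : h • T ⊆ T) (hgh : Disjoint (g • T) (h • T)) :
    EnergyDominates w T := by
  obtain ⟨C, hC₀, hC⟩ := exists_displacement_le_energy (X := X) hw₀ hg
  obtain ⟨D, hD₀, hD⟩ := exists_displacement_le_energy (X := X) hw₀ hh
  refine ⟨6 * (C + D), by positivity, fun u hu ↦ ?_⟩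
  linarith [tsum_sq_le_displacement_add_displacement hu hgT hhT hgh, hC u hu, hD u hu]

end Energy

section Green

variable {G X : Type*} [Group G] [MulAction G X] {w : G →₀ ℝ} {κ : X → ℝ} {T : Set X}

/-- The Green potential of `κ` truncated at time `n`: the expected total `κ`-reward collected during
the first `n` steps of the walk. -/
def greenSum (w : G →₀ ℝ) (κ : X → ℝ) (n : ℕ) : X → ℝ := ∑ i ∈ Finset.range n, (markov w ^ i) κ

/-- The Green potential of `κ`, with junk value `0` where the series diverges. -/
def green (w : G →₀ ℝ) (κ : X → ℝ) (x : X) : ℝ := ∑' n, (markov w ^ n) κ x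

lemma greenSum_apply (w : G →₀ ℝ) (κ : X → ℝ) (n : ℕ) (x : X) :
    greenSum w κ n x = ∑ i ∈ Finset.range n, (markov w ^ i) κ x :=
  Finset.sum_apply x _ _

lemma greenSum_nonneg (hw₀ : 0 ≤ w) (hκ₀ : 0 ≤ κ) (n : ℕ) : 0 ≤ greenSum w κ n :=
  Finset.sum_nonneg fun i _ ↦ markov_pow_nonneg hw₀ hκ₀ i

lemma hasFiniteSupport_greenSum (w : G →₀ ℝ) (hκ : κ.HasFiniteSupport) (n : ℕ) :
    (greenSum w κ n).HasFiniteSupport := by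
  simp only [funext (greenSum_apply w κ n)]
  exact HasFiniteSupport.sum (hasFiniteSupport_markov_pow w hκ) _

lemma greenSum_sub_markov_greenSum (w : G →₀ ℝ) (κ : X → ℝ) (n : ℕ) :
    greenSum w κ n - markov w (greenSum w κ n) = κ - (markov w ^ n) κ := by
  simpa [greenSum, sub_mul, LinearMap.sum_apply] using
    LinearMap.congr_fun (mul_neg_geom_sum (markov w) n) κ

lemma energy_greenSum_le (hw₀ : 0 ≤ w) (hw₁ : ∑ g ∈ w.support, w g = 1)
    (hκ : κ.HasFiniteSupport) (hκ₀ : 0 ≤ κ) (n : ℕ) :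
    energy w (greenSum w κ n) ≤ 2 * ∑' x, greenSum w κ n x * κ x := by
  have hfin := hasFiniteSupport_greenSum w hκ n
  have hle : ∑' x, greenSum w κ n x * (greenSum w κ n x - markov w (greenSum w κ n) x) ≤
      ∑' x, greenSum w κ n x * κ x := by
    refine (summable_of_hasFiniteSupport (hfin.fun_mul_left _)).tsum_le_tsum (fun x ↦ ?_)
      (summable_of_hasFiniteSupport (hfin.fun_mul_left _))
    refine mul_le_mul_of_nonneg_left ?_ (greenSum_nonneg hw₀ hκ₀ n x)
    rw [← Pi.sub_apply, greenSum_sub_markov_greenSum]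
    exact sub_le_self _ (markov_pow_nonneg hw₀ hκ₀ n x)
  linarith [tsum_mul_self_sub_markov hw₁ hfin]

lemma sq_tsum_mul_le {α : Type*} {f κ : α → ℝ} (hκ : κ.HasFiniteSupport) :
    (∑' x, f x * κ x) ^ 2 ≤ (∑' x : support κ, f x ^ 2) * ∑' x : support κ, κ x ^ 2 := by
  obtain ⟨F, hF⟩ : ∃ F : Finset α, (F : Set α) = support κ := hκ.exists_finset_coe
  rw [tsum_eq_sum (s := F) fun x hx ↦ by
      rw [← Finset.mem_coe, hF, notMem_support] at hx; rw [hx, mul_zero],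
    ← hF, Finset.tsum_subtype' F fun x ↦ f x ^ 2, Finset.tsum_subtype' F fun x ↦ κ x ^ 2]
  exact Finset.sum_mul_sq_le_sq_mul_sq F f κ

-- Cauchy–Schwarz turns `energy ≤ 2 ⟨greenSum, κ⟩` into `energy ^ 2 ≤ 4 * C * ‖κ‖ ^ 2 * energy`.
lemma exists_energy_greenSum_le (hw₀ : 0 ≤ w) (hw₁ : ∑ g ∈ w.support, w g = 1)
    (hκ : κ.HasFiniteSupport) (hκ₀ : 0 ≤ κ) (hdom : EnergyDominates w (support κ)) :
    ∃ M, ∀ n, energy w (greenSum w κ n) ≤ M := by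
  obtain ⟨C, hC₀, hC⟩ := hdom
  set S := ∑' x : support κ, κ x ^ 2
  have : 0 ≤ S := tsum_nonneg fun _ ↦ sq_nonneg _
  refine ⟨4 * C * S, fun n ↦ ?_⟩
  set E := energy w (greenSum w κ n)
  have hE₀ : 0 ≤ E := energy_nonneg hw₀ _
  have hsq : E * E ≤ 4 * C * S * E := calc
    E * E = E ^ 2 := (sq E).symm
    _ ≤ (2 * ∑' x, greenSum w κ n x * κ x) ^ 2 :=
      pow_le_pow_left₀ hE₀ (energy_greenSum_le hw₀ hw₁ hκ hκ₀ n) 2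
    _ = 4 * (∑' x, greenSum w κ n x * κ x) ^ 2 := by ring
    _ ≤ 4 * ((C * E) * S) := by
      gcongr
      refine (sq_tsum_mul_le hκ).trans ?_
      gcongr
      exact hC _ (hasFiniteSupport_greenSum w hκ n)
    _ = 4 * C * S * E := by ring
  rcases hE₀.eq_or_lt' with hE | hE
  · rw [hE]; positivity
  · exact le_of_mul_le_mul_right hsq hE

lemma exists_tsum_greenSum_sq_le (hw₀ : 0 ≤ w) (hw₁ : ∑ g ∈ w.support, w g = 1)
    (hκ : κ.HasFiniteSupport) (hκ₀ : 0 ≤ κ) (hdom : EnergyDominates w (support κ))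
    (hT : EnergyDominates w T) :
    ∃ M, ∀ n, ∑' x : T, greenSum w κ n x ^ 2 ≤ M := by
  obtain ⟨M, hM⟩ := exists_energy_greenSum_le hw₀ hw₁ hκ hκ₀ hdom
  obtain ⟨C, hC₀, hC⟩ := hT
  exact ⟨C * M, fun n ↦ (hC _ (hasFiniteSupport_greenSum w hκ n)).trans
    (mul_le_mul_of_nonneg_left (hM n) hC₀)⟩

lemma summable_markov_pow (hw₀ : 0 ≤ w) (hw₁ : ∑ g ∈ w.support, w g = 1)
    (hκ : κ.HasFiniteSupport) (hκ₀ : 0 ≤ κ) (hdom : EnergyDominates w (support κ)) {x : X}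
    (hx : EnergyDominates w {x}) : Summable fun n ↦ (markov w ^ n) κ x := by
  obtain ⟨M, hM⟩ := exists_tsum_greenSum_sq_le hw₀ hw₁ hκ hκ₀ hdom hx
  refine summable_of_sum_range_le (c := √M) (fun n ↦ markov_pow_nonneg hw₀ hκ₀ n x) fun n ↦ ?_
  rw [← greenSum_apply]
  refine Real.le_sqrt_of_sq_le ?_
  simpa only [tsum_singleton x fun x ↦ greenSum w κ n x ^ 2] using hM n

lemma summable_green_sq (hw₀ : 0 ≤ w) (hw₁ : ∑ g ∈ w.support, w g = 1)
    (hκ : κ.HasFiniteSupport) (hκ₀ : 0 ≤ κ) (hdom : ∀ x : X, EnergyDominates w {x})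
    (hT : EnergyDominates w T) : Summable fun x : T ↦ green w κ x ^ 2 := by
  have hsupp : EnergyDominates w (support κ) := energyDominates_of_finite hκ fun x _ ↦ hdom x
  obtain ⟨M, hM⟩ := exists_tsum_greenSum_sq_le hw₀ hw₁ hκ hκ₀ hsupp hT
  refine summable_of_sum_le (c := M) (fun _ ↦ sq_nonneg _) fun F ↦ ?_
  have hlim : Tendsto (fun n ↦ ∑ x ∈ F, greenSum w κ n x ^ 2) atTop
      (𝓝 (∑ x ∈ F, green w κ x ^ 2)) := by
    refine tendsto_finsetSum _ fun x _ ↦ Tendsto.pow ?_ 2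
    simp only [greenSum_apply]
    exact (summable_markov_pow hw₀ hw₁ hκ hκ₀ hsupp (hdom x)).hasSum.tendsto_sum_nat
  refine le_of_tendsto' hlim fun n ↦
    (Summable.sum_le_tsum F (fun _ _ ↦ sq_nonneg _) ?_).trans (hM n)
  exact (summable_sq_of_hasFiniteSupport (hasFiniteSupport_greenSum w hκ n)).subtype T

lemma green_comp {Y : Type*} [MulAction G Y] (w : G →₀ ℝ) (κ : X → ℝ) (π : Y →[G] X) :
    green w (κ ∘ π) = green w κ ∘ π := by
  ext y
  simp only [green, markov_pow_comp, comp_apply]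

lemma exists_mem_green_lt (hw₀ : 0 ≤ w) (hw₁ : ∑ g ∈ w.support, w g = 1)
    (hκ : κ.HasFiniteSupport) (hκ₀ : 0 ≤ κ) (hdom : ∀ x : X, EnergyDominates w {x})
    (hT : EnergyDominates w T) (hinf : T.Infinite) {ε : ℝ} (hε : 0 < ε) :
    ∃ x ∈ T, green w κ x < ε := by
  have := hinf.to_subtype
  have hsmall : ∀ᶠ x : T in cofinite, green w κ x ^ 2 < ε ^ 2 :=
    (summable_green_sq hw₀ hw₁ hκ hκ₀ hdom hT).tendsto_cofinite_zero.eventually_lt_const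
      (pow_pos hε 2)
  obtain ⟨x, hx⟩ := hsmall.exists
  exact ⟨x, x.2, lt_of_pow_lt_pow_left₀ 2 hε.le hx⟩

lemma exists_harmonic_abs_sub_le_green {φ δ : X → ℝ} (hw₀ : 0 ≤ w)
    (hδ : ∀ x, |markov w φ x - φ x| ≤ δ x) (hsum : ∀ x, Summable fun n ↦ (markov w ^ n) δ x) :
    ∃ f : X → ℝ, markov w f = f ∧ (∀ x, |f x - φ x| ≤ green w δ x) ∧
      ∀ x, Tendsto (fun n ↦ (markov w ^ n) φ x) atTop (𝓝 (f x)) := by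
  have hstep (x : X) (n : ℕ) :
      dist ((markov w ^ n) φ x) ((markov w ^ (n + 1)) φ x) ≤ (markov w ^ n) δ x := by
    have := abs_markov_pow_le (u := markov w φ - φ) hw₀ hδ n x
    rwa [map_sub, ← Module.End.mul_apply, ← pow_succ, Pi.sub_apply, abs_sub_comm] at this
  choose f hf using fun x ↦
    cauchySeq_tendsto_of_complete (cauchySeq_of_dist_le_of_summable _ (hstep x) (hsum x))
  refine ⟨f, funext fun x ↦ ?_, fun x ↦ ?_, hf⟩
  · have hlim : Tendsto (fun n ↦ (markov w ^ (n + 1)) φ x) atTop (𝓝 (markov w f x)) := by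
      simp only [pow_succ', Module.End.mul_apply, markov_apply]
      exact tendsto_finsetSum _ fun g _ ↦ (hf (g • x)).const_mul (w g)
    exact tendsto_nhds_unique hlim ((hf x).comp (tendsto_add_atTop_nat 1))
  · rw [abs_sub_comm]
    exact dist_le_tsum_of_dist_le_of_tendsto₀ _ (hstep x) (hsum x) (hf x)

end Green

section Regularity

variable {G E : Type*} [Group G] [NormedAddCommGroup E] [NormedSpace ℝ E] [MulAction G E]
  {w : G →₀ ℝ} {g h : G} {v x : E}

/-- The germ at `x` of the bijection `g • ·` is a germ of local diffeomorphism, in the weak sense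
that the bijection and its inverse are differentiable at `x` and at `g • x`. -/
def IsRegularAt (g : G) (x : E) : Prop :=
  DifferentiableAt ℝ (g • · : E → E) x ∧ DifferentiableAt ℝ (g⁻¹ • · : E → E) (g • x)

lemma isRegularAt_one (x : E) : IsRegularAt (1 : G) x := by
  simp only [IsRegularAt, inv_one, one_smul, differentiableAt_fun_id, and_self]

lemma IsRegularAt.inv (hg : IsRegularAt g x) : IsRegularAt g⁻¹ (g • x) :=
  ⟨hg.2, by simpa only [inv_inv, inv_smul_smul] using hg.1⟩

lemma IsRegularAt.mul (hg : IsRegularAt g (h • x)) (hh : IsRegularAt h x) :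
    IsRegularAt (g * h) x := by
  refine ⟨?_, ?_⟩
  · simpa only [mul_smul] using! hg.1.comp x hh.1
  · have hinv : DifferentiableAt ℝ (h⁻¹ • · : E → E) (g⁻¹ • g • h • x) := by
      simpa only [inv_smul_smul] using hh.2
    simpa only [mul_inv_rev, mul_smul] using! hinv.comp (g • h • x) hg.2

lemma isRegularAt_mul_iff (hg : IsRegularAt g (h • x)) :
    IsRegularAt (g * h) x ↔ IsRegularAt h x := by
  refine ⟨fun hgh ↦ ?_, hg.mul⟩
  rw [← inv_mul_cancel_left g h]
  exact IsRegularAt.mul (by simpa only [mul_smul] using hg.inv) hgh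

lemma not_isRegularAt_conj (hg : IsRegularAt g x) (hx : h • x = x) (hh : ¬ IsRegularAt h x) :
    ¬ IsRegularAt (g * h * g⁻¹) (g • x) := fun hconj ↦ hh <| by
  have hgh : IsRegularAt (g * h) x := by simpa only [inv_mul_cancel_right] using hconj.mul hg
  exact (isRegularAt_mul_iff (by rwa [hx])).1 hgh

/-- The points at which the bijection `g • ·` is not regular. -/
def singularSet (E : Type*) [NormedAddCommGroup E] [NormedSpace ℝ E] [MulAction G E] (g : G) :
    Set E :=
  {x | ¬ IsRegularAt g x}

lemma finite_singularSet_of_mem_closure {S : Set G} (hS : ∀ g ∈ S, (singularSet E g).Finite)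
    (hg : g ∈ Subgroup.closure S) : (singularSet E g).Finite := by
  induction hg using Subgroup.closure_induction with
  | mem g hg => exact hS g hg
  | one => exact Set.finite_empty.subset fun x hx ↦ hx (isRegularAt_one x)
  | mul g h _ _ ihg ihh =>
    refine (ihh.union (ihg.preimage (MulAction.injective h).injOn)).subset fun x hx ↦ ?_
    by_contra! hcontra
    simp only [singularSet, Set.mem_union, Set.mem_preimage, Set.mem_ofPred_eq, not_or,
      not_not] at hcontra
    exact hx (hcontra.2.mul hcontra.1)
  | inv g _ ih =>
    refine (ih.preimage (MulAction.injective g⁻¹).injOn).subset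
      fun x hx (hreg : IsRegularAt g _) ↦ hx ?_
    simpa only [smul_inv_smul] using hreg.inv

/-- The probability that the walk with step weights `w`, standing at `x`, next moves by a bijection
that is not regular at `x`. -/
def singularMass (w : G →₀ ℝ) (x : E) : ℝ :=
  ∑ g ∈ w.support, w g * (singularSet E g).indicator 1 x

lemma singularMass_nonneg (hw₀ : 0 ≤ w) : 0 ≤ (singularMass w : E → ℝ) := fun x ↦
  Finset.sum_nonneg fun g _ ↦
    mul_nonneg (hw₀ g) (Set.indicator_nonneg (fun _ _ ↦ zero_le_one) x)

lemma hasFiniteSupport_singularMass (hsing : ∀ g ∈ w.support, (singularSet E g).Finite) :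
    (singularMass w : E → ℝ).HasFiniteSupport := by
  refine (w.support.finite_toSet.biUnion hsing).subset fun x hx ↦ ?_
  obtain ⟨g, hg, hgx⟩ := Finset.exists_ne_zero_of_sum_ne_zero hx
  exact Set.mem_biUnion hg (Set.mem_of_indicator_ne_zero (right_ne_zero_of_mul hgx))

/-- The function on `G` recording which group elements are regular at the point `v`. -/
def regularIndicator (v : E) : G → ℝ := {g : G | IsRegularAt g v}.indicator 1

lemma regularIndicator_of_isRegularAt (hg : IsRegularAt g v) : regularIndicator v g = 1 :=
  Set.indicator_of_mem (s := {g : G | IsRegularAt g v}) hg 1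

lemma regularIndicator_of_not_isRegularAt (hg : ¬ IsRegularAt g v) : regularIndicator v g = 0 :=
  Set.indicator_of_notMem (s := {g : G | IsRegularAt g v}) hg 1

lemma regularIndicator_mem_Icc (v : E) (g : G) : regularIndicator v g ∈ Set.Icc (0 : ℝ) 1 :=
  ⟨Set.indicator_nonneg (fun _ _ ↦ zero_le_one) g,
    Set.indicator_le_self' (fun _ _ ↦ zero_le_one) g⟩

lemma abs_regularIndicator_le_one (v : E) (g : G) : |regularIndicator v g| ≤ 1 := by
  rw [abs_of_nonneg (regularIndicator_mem_Icc v g).1]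
  exact (regularIndicator_mem_Icc v g).2

lemma abs_regularIndicator_mul_sub_le (v : E) (g h : G) :
    |regularIndicator v (h * g) - regularIndicator v g| ≤
      (singularSet E h).indicator 1 (g • v) := by
  by_cases hreg : IsRegularAt h (g • v)
  · rw [Set.indicator_of_notMem (not_not.2 hreg)]
    by_cases hg : IsRegularAt g v
    · rw [regularIndicator_of_isRegularAt hg, regularIndicator_of_isRegularAt (hreg.mul hg),
        sub_self, abs_zero]
    · rw [regularIndicator_of_not_isRegularAt hg,
        regularIndicator_of_not_isRegularAt ((isRegularAt_mul_iff hreg).not.2 hg),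
        sub_self, abs_zero]
  · rw [Set.indicator_of_mem (show g • v ∈ singularSet E h from hreg), Pi.one_apply]
    exact Real.dist_le_of_mem_Icc_01 (regularIndicator_mem_Icc v _) (regularIndicator_mem_Icc v _)

lemma abs_markov_regularIndicator_sub_le (hw₀ : 0 ≤ w) (hw₁ : ∑ g ∈ w.support, w g = 1) (v : E)
    (g : G) :
    |markov w (regularIndicator v) g - regularIndicator v g| ≤ singularMass w (g • v) := by
  rw [markov_sub_self_apply hw₁]
  refine (Finset.abs_sum_le_sum_abs _ _).trans (Finset.sum_le_sum fun h _ ↦ ?_)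
  rw [abs_mul, abs_of_nonneg (hw₀ h)]
  exact mul_le_mul_of_nonneg_left (abs_regularIndicator_mul_sub_le v g h) (hw₀ h)

theorem exists_bounded_nonconstant_harmonic_of_singular {T : Set E} (hw₀ : 0 ≤ w)
    (hw₁ : ∑ g ∈ w.support, w g = 1) (hsing : ∀ g ∈ w.support, (singularSet E g).Finite)
    (hdom : ∀ x : E, EnergyDominates w {x}) (hT : EnergyDominates w T) (hinf : T.Infinite)
    (hfix : ∀ x ∈ T, ∃ g : G, g • x = x ∧ ¬ IsRegularAt g x) :
    ∃ f : G → ℝ, (∃ c, ∀ g, |f g| ≤ c) ∧ markov w f = f ∧ ∃ g₁ g₂, f g₁ ≠ f g₂ := by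
  have hκ := hasFiniteSupport_singularMass hsing
  have hκ₀ := singularMass_nonneg (E := E) hw₀
  obtain ⟨v, hvT, hv⟩ := exists_mem_green_lt hw₀ hw₁ hκ hκ₀ hdom hT hinf one_half_pos
  obtain ⟨g, hgv, hg⟩ := hfix v hvT
  let orbit : G →[G] E := ⟨(· • v), fun h k ↦ mul_smul h k v⟩
  obtain ⟨f, hf, hfar, hlim⟩ := exists_harmonic_abs_sub_le_green (δ := singularMass w ∘ orbit) hw₀
    (abs_markov_regularIndicator_sub_le hw₀ hw₁ v) fun k ↦ by
      simpa only [markov_pow_comp] using! summable_markov_pow hw₀ hw₁ hκ hκ₀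
        (energyDominates_of_finite hκ fun x _ ↦ hdom x) (hdom (orbit k))
  have hnear (k : G) (hk : k • v = v) : |f k - regularIndicator v k| < 1 / 2 := by
    refine (hfar k).trans_lt ?_
    rwa [green_comp, comp_apply, show orbit k = v from hk]
  refine ⟨f, ⟨1, fun k ↦ le_of_tendsto (hlim k).abs (.of_forall fun n ↦
    abs_markov_pow_le_const hw₀ hw₁ (abs_regularIndicator_le_one v) n k)⟩, hf, 1, g, fun heq ↦ ?_⟩
  have hone := hnear 1 (one_smul G v)
  have hsingular := hnear g hgv
  rw [regularIndicator_of_isRegularAt (isRegularAt_one v), heq] at hone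
  rw [regularIndicator_of_not_isRegularAt hg] at hsingular
  linarith [(abs_lt.1 hone).1, (abs_lt.1 hsingular).2]

end Regularity

section Thompson

lemma isRegularAt_of_eventuallyEq_affine {G : Type*} [Group G] [MulAction G ℝ] {g : G}
    {x a c : ℝ} (ha : a ≠ 0) (hg : (g • · : ℝ → ℝ) =ᶠ[𝓝 x] fun y ↦ a * y + c) :
    IsRegularAt g x := by
  have hx : (g • x - c) / a = x := by
    rw [hg.eq_of_nhds, add_sub_cancel_right, mul_div_cancel_left₀ x ha]
  have hlim : Tendsto (fun z ↦ (z - c) / a) (𝓝 (g • x)) (𝓝 x) :=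
    Continuous.tendsto' (by fun_prop) _ _ hx
  have hinv : (g⁻¹ • · : ℝ → ℝ) =ᶠ[𝓝 (g • x)] fun z ↦ (z - c) / a := by
    filter_upwards [hlim.eventually hg] with z hz
    rw [inv_smul_eq_iff, hz, mul_div_cancel₀ _ ha, sub_add_cancel]
  exact ⟨DifferentiableAt.congr_of_eventuallyEq (by fun_prop) hg,
    DifferentiableAt.congr_of_eventuallyEq (by fun_prop) hinv⟩

/-- The generator `Ã` as an element of `F̃`. -/
def genA : Ftil := ⟨Atil, Subgroup.subset_closure (Set.mem_insert _ _)⟩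

/-- The generator `B̃` as an element of `F̃`. -/
def genB : Ftil := ⟨Btil, Subgroup.subset_closure (Set.mem_insert_of_mem _ rfl)⟩

lemma genA_smul (x : ℝ) : genA • x = x - 1 := rfl

lemma genA_inv_smul (x : ℝ) : genA⁻¹ • x = x + 1 := rfl

lemma genA_zpow_smul (n : ℤ) (x : ℝ) : genA ^ n • x = x - n := by
  induction n generalizing x with
  | zero => rw [zpow_zero, one_smul, Int.cast_zero, sub_zero]
  | succ n ih => rw [zpow_add_one, mul_smul, ih, genA_smul]; push_cast; ring
  | pred n ih => rw [zpow_sub_one, mul_smul, ih, genA_inv_smul]; push_cast; ring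

lemma genB_smul_of_nonpos {x : ℝ} (hx : x ≤ 0) : genB • x = x := if_pos hx

lemma genB_smul_of_mem_Icc {x : ℝ} (hx : x ∈ Set.Icc 0 2) : genB • x = x / 2 := by
  change Bfun x = x / 2
  unfold Bfun
  split_ifs <;> linarith [hx.1, hx.2]

lemma genB_smul_of_two_le {x : ℝ} (hx : 2 ≤ x) : genB • x = x - 1 := by
  change Bfun x = x - 1
  unfold Bfun
  split_ifs <;> linarith

lemma genB_smul_Ioo_subset : genB • Set.Ioo (0 : ℝ) 2 ⊆ Set.Ioo 0 1 := by
  rintro _ ⟨x, hx, rfl⟩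
  simp only [genB_smul_of_mem_Icc (Set.Ioo_subset_Icc_self hx)]
  constructor <;> linarith [hx.1, hx.2]

lemma genA_inv_mul_genB_smul_Ioo_subset :
    (genA⁻¹ * genB) • Set.Ioo (0 : ℝ) 2 ⊆ Set.Ioo 1 2 := by
  rintro _ ⟨x, hx, rfl⟩
  simp only [mul_smul, genB_smul_of_mem_Icc (Set.Ioo_subset_Icc_self hx), genA_inv_smul]
  constructor <;> linarith [hx.1, hx.2]

lemma exists_smul_mem_Ioo (x : ℝ) : ∃ g : Ftil, g • x ∈ Set.Ioo (0 : ℝ) 2 := by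
  refine ⟨genA ^ (⌊x⌋ - 1), ?_⟩
  rw [genA_zpow_smul]
  push_cast
  constructor <;> linarith [Int.floor_le x, Int.lt_floor_add_one x]

variable {w : Ftil →₀ ℝ}

lemma energyDominates_Ioo (hw₀ : 0 ≤ w) (hgen : Subgroup.closure (w.support : Set Ftil) = ⊤) :
    EnergyDominates w (Set.Ioo (0 : ℝ) 2) :=
  energyDominates_of_disjoint_smul (g := genB) (h := genA⁻¹ * genB) hw₀ (hgen ▸ Subgroup.mem_top _)
    (hgen ▸ Subgroup.mem_top _)
    (genB_smul_Ioo_subset.trans (Set.Ioo_subset_Ioo_right one_le_two))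
    (genA_inv_mul_genB_smul_Ioo_subset.trans (Set.Ioo_subset_Ioo_left zero_le_one))
    ((Set.Ioo_disjoint_Ioo.2 (by norm_num)).mono genB_smul_Ioo_subset
      genA_inv_mul_genB_smul_Ioo_subset)

lemma energyDominates_singleton (hw₀ : 0 ≤ w)
    (hgen : Subgroup.closure (w.support : Set Ftil) = ⊤) (x : ℝ) : EnergyDominates w {x} := by
  obtain ⟨g, hg⟩ := exists_smul_mem_Ioo x
  exact (energyDominates_Ioo hw₀ hgen).singleton_of_smul_mem hw₀ (hgen ▸ Subgroup.mem_top g) hg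

lemma isRegularAt_genA (x : ℝ) : IsRegularAt genA x :=
  isRegularAt_of_eventuallyEq_affine one_ne_zero (c := -1) <| .of_forall fun y ↦ by
    simp only [genA_smul, one_mul, sub_eq_add_neg]

lemma isRegularAt_genB {x : ℝ} (hx₀ : x ≠ 0) (hx₂ : x ≠ 2) : IsRegularAt genB x := by
  rcases hx₀.lt_or_gt with hneg | hpos
  · refine isRegularAt_of_eventuallyEq_affine one_ne_zero (c := 0) ?_
    filter_upwards [Iic_mem_nhds hneg] with y hy
    rw [genB_smul_of_nonpos hy, one_mul, add_zero]
  rcases hx₂.lt_or_gt with hlt | hgt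
  · refine isRegularAt_of_eventuallyEq_affine one_half_pos.ne' (c := 0) ?_
    filter_upwards [Icc_mem_nhds hpos hlt] with y hy
    rw [genB_smul_of_mem_Icc hy]
    ring
  · refine isRegularAt_of_eventuallyEq_affine one_ne_zero (c := -1) ?_
    filter_upwards [Ici_mem_nhds hgt] with y hy
    rw [genB_smul_of_two_le hy, one_mul, sub_eq_add_neg]

lemma not_isRegularAt_genB_zero : ¬ IsRegularAt genB (0 : ℝ) := by
  rintro ⟨hdiff, -⟩
  have hleft : HasDerivWithinAt (genB • · : ℝ → ℝ) 1 (Set.Iic 0) 0 :=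
    (hasDerivWithinAt_id 0 _).congr_of_mem (fun _ hx ↦ genB_smul_of_nonpos hx) Set.self_mem_Iic
  have hright : HasDerivWithinAt (genB • · : ℝ → ℝ) (1 / 2) (Set.Icc 0 2) 0 :=
    ((hasDerivWithinAt_id 0 _).div_const 2).congr_of_mem (fun _ hx ↦ genB_smul_of_mem_Icc hx)
      (Set.left_mem_Icc.2 zero_le_two)
  have hone := (uniqueDiffOn_Iic (0 : ℝ) 0 Set.self_mem_Iic).eq_deriv _ hleft
    hdiff.hasDerivAt.hasDerivWithinAt
  have hhalf := (uniqueDiffOn_Icc (zero_lt_two' ℝ) 0 (Set.left_mem_Icc.2 zero_le_two)).eq_deriv _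
    hright hdiff.hasDerivAt.hasDerivWithinAt
  linarith

lemma finite_singularSet (g : Ftil) : (singularSet ℝ g).Finite := by
  change (singularSet ℝ (g : Equiv.Perm ℝ)).Finite
  refine finite_singularSet_of_mem_closure ?_ g.2
  rintro _ (rfl | rfl)
  · exact Set.finite_empty.subset fun x hx ↦ hx (isRegularAt_genA x)
  · refine (Set.toFinite {0, 2}).subset fun x hx ↦ ?_
    by_contra! hx'
    simp only [Set.mem_insert_iff, Set.mem_singleton_iff, not_or] at hx'
    exact hx (isRegularAt_genB hx'.1 hx'.2)

lemma exists_isRegularAt_zero_smul_eq (k : ℕ) :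
    ∃ g : Ftil, g • (0 : ℝ) = (1 / 2) ^ k ∧ IsRegularAt g (0 : ℝ) := by
  induction k with
  | zero =>
    refine ⟨genA⁻¹, by rw [genA_inv_smul, zero_add, pow_zero], ?_⟩
    simpa only [genA_smul, sub_self] using (isRegularAt_genA 1).inv
  | succ k ih =>
    obtain ⟨g, hg, hreg⟩ := ih
    have hpos : (0 : ℝ) < (1 / 2) ^ k := by positivity
    have hlt : (1 / 2 : ℝ) ^ k < 2 :=
      (pow_le_one₀ one_half_pos.le one_half_lt_one.le).trans_lt one_lt_two
    refine ⟨genB * g, ?_, .mul ?_ hreg⟩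
    · rw [mul_smul, hg, genB_smul_of_mem_Icc ⟨hpos.le, hlt.le⟩, pow_succ, div_eq_mul_one_div]
    · rw [hg]
      exact isRegularAt_genB hpos.ne' hlt.ne

lemma exists_smul_eq_self_not_isRegularAt (k : ℕ) :
    ∃ g : Ftil, g • ((1 / 2 : ℝ) ^ k) = (1 / 2) ^ k ∧ ¬ IsRegularAt g ((1 / 2 : ℝ) ^ k) := by
  obtain ⟨g, hg, hreg⟩ := exists_isRegularAt_zero_smul_eq k
  have hfix : genB • (0 : ℝ) = 0 := genB_smul_of_nonpos le_rfl
  refine ⟨g * genB * g⁻¹, ?_, ?_⟩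
  · rw [← hg, mul_smul, inv_smul_smul, mul_smul, hfix]
  · rw [← hg]
    exact not_isRegularAt_conj hreg hfix not_isRegularAt_genB_zero

theorem exists_bounded_nonconstant_harmonic (hw₀ : 0 ≤ w) (hw₁ : ∑ g ∈ w.support, w g = 1)
    (hgen : Subgroup.closure (w.support : Set Ftil) = ⊤) :
    ∃ f : Ftil → ℝ, (∃ c, ∀ g, |f g| ≤ c) ∧ markov w f = f ∧ ∃ g₁ g₂, f g₁ ≠ f g₂ := by
  have hsub : Set.range (fun k : ℕ ↦ (1 / 2 : ℝ) ^ k) ⊆ Set.Ioo 0 2 := by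
    rintro _ ⟨k, rfl⟩
    exact ⟨by positivity, (pow_le_one₀ one_half_pos.le one_half_lt_one.le).trans_lt one_lt_two⟩
  have hinf : (Set.range fun k : ℕ ↦ (1 / 2 : ℝ) ^ k).Infinite :=
    Set.infinite_range_of_injective (pow_right_injective₀ one_half_pos one_half_lt_one.ne)
  refine exists_bounded_nonconstant_harmonic_of_singular hw₀ hw₁ (fun g _ ↦ finite_singularSet g)
    (energyDominates_singleton hw₀ hgen) ((energyDominates_Ioo hw₀ hgen).mono hsub) hinf ?_
  rintro _ ⟨k, rfl⟩
  exact exists_smul_eq_self_not_isRegularAt k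

end Thompson

section StepWeights

variable {α : Type*} {μ : PMF α}

/-- The probabilities of a finitely supported `PMF` as a finitely supported real function. -/
def stepWeights (μ : PMF α) (hfin : μ.support.Finite) : α →₀ ℝ :=
  .ofSupportFinite (fun a ↦ (μ a).toReal) <| hfin.subset fun a ha ↦
    (μ.mem_support_iff a).2 (ENNReal.toReal_ne_zero.1 ha).1

lemma stepWeights_apply (hfin : μ.support.Finite) (a : α) :
    stepWeights μ hfin a = (μ a).toReal := rfl

lemma stepWeights_nonneg (hfin : μ.support.Finite) : 0 ≤ stepWeights μ hfin :=
  fun _ ↦ ENNReal.toReal_nonneg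

lemma coe_support_stepWeights (hfin : μ.support.Finite) :
    ((stepWeights μ hfin).support : Set α) = μ.support := by
  ext a
  rw [Finset.mem_coe, Finsupp.mem_support_iff, stepWeights_apply, PMF.mem_support_iff,
    ENNReal.toReal_ne_zero, and_iff_left (μ.apply_ne_top a)]

lemma tsum_toReal_mul_eq_sum_stepWeights (hfin : μ.support.Finite) (f : α → ℝ) :
    ∑' a, (μ a).toReal * f a = ∑ a ∈ (stepWeights μ hfin).support, stepWeights μ hfin a * f a :=
  tsum_eq_sum fun a ha ↦ by rw [← stepWeights_apply hfin, Finsupp.notMem_support_iff.1 ha, zero_mul]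

lemma sum_stepWeights (hfin : μ.support.Finite) :
    ∑ a ∈ (stepWeights μ hfin).support, stepWeights μ hfin a = 1 := by
  have h := tsum_toReal_mul_eq_sum_stepWeights hfin fun _ ↦ 1
  simp only [mul_one] at h
  rw [← h, ← ENNReal.tsum_toReal_eq μ.apply_ne_top, μ.tsum_coe, ENNReal.toReal_one]

end StepWeights

theorem thompson_not_liouville_general (μ : PMF ↥Ftil) (hfin : μ.support.Finite)
    (hnondeg : Subgroup.closure μ.support = (⊤ : Subgroup ↥Ftil)) :
    ∃ f : ↥Ftil → ℝ,
      (∃ c : ℝ, ∀ g, |f g| ≤ c) ∧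
      (∀ g : ↥Ftil, f g = ∑' h : ↥Ftil, (μ h).toReal * f (h * g)) ∧
      (∃ g₁ g₂ : ↥Ftil, f g₁ ≠ f g₂) := by
  obtain ⟨f, hbdd, hharm, hne⟩ := exists_bounded_nonconstant_harmonic (stepWeights_nonneg hfin)
    (sum_stepWeights hfin) (by rwa [coe_support_stepWeights])
  refine ⟨f, hbdd, fun g ↦ ?_, hne⟩
  rw [tsum_toReal_mul_eq_sum_stepWeights hfin fun h ↦ f (h * g)]
  exact (congr_fun hharm g).symm.trans (markov_apply _ f g)

/-- Thompson's group `F` is not Liouville: for every strictly non-degenerate finitely supported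
probability measure `μ` on `F̃` there is a bounded non-constant `μ`-harmonic function.
Harmonicity `f(g) = ∑ₕ μ(h) f(g·h)` is expressed with the paper's product `g·h = h * g`. -/
theorem thompson_not_liouville (μ : PMF ↥Ftil)
    (hfin : μ.support.Finite)
    (hnondeg : Subsemigroup.closure μ.support = (⊤ : Subsemigroup ↥Ftil)) :
    ∃ f : ↥Ftil → ℝ,
      (∃ c : ℝ, ∀ g, |f g| ≤ c) ∧
      (∀ g : ↥Ftil, f g = ∑' h : ↥Ftil, (μ h).toReal * f (h * g)) ∧
      (∃ g₁ g₂ : ↥Ftil, f g₁ ≠ f g₂) := by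
  refine thompson_not_liouville_general μ hfin (eq_top_iff.2 fun g _ ↦ ?_)
  have hle : Subsemigroup.closure μ.support ≤
      (Subgroup.closure μ.support).toSubmonoid.toSubsemigroup :=
    Subsemigroup.closure_le.2 Subgroup.subset_closure
  exact hle (hnondeg ▸ Subsemigroup.mem_top g)
end
end

section
/- For almost every sample path (γ_n) of the simple random walk on the Schreier graph Γ ≅ ℤ[1/2] started at γ₀ = 0, the 2-adic norms tend to infinity: padicNorm 2 (γ_n) → ∞ as n → ∞. -/
open MeasureTheory Filter

noncomputable section

/-- The four one-step moves of the simple random walk on the Schreier graph `Γ ≅ ℤ[1/2]`,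
acting on rationals: `Ã`, `Ã⁻¹`, `B̃` and `B̃⁻¹` in this order. -/
def stepQ : Fin 4 → ℚ → ℚ
  | 0 => fun x => x - 1
  | 1 => fun x => x + 1
  | 2 => fun x => if x ≤ 0 then x else if x ≤ 2 then x / 2 else x - 1
  | 3 => fun x => if x ≤ 0 then x else if x ≤ 1 then 2 * x else x + 1

/-- The trajectory of the simple random walk on `Γ` driven by the sequence of choices `s`,
started at `γ₀`: at each step one of the four maps `Ã, Ã⁻¹, B̃, B̃⁻¹` is applied. -/
def walkQ (s : ℕ → Fin 4) (γ₀ : ℚ) : ℕ → ℚ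
  | 0 => γ₀
  | n + 1 => stepQ (s n) (walkQ s γ₀ n)

/-- The set `ℤ[1/2] ⊆ ℚ` of dyadic rational numbers. -/
def DyadicQ : Set ℚ := {x | ∃ (k : ℤ) (m : ℕ), x = (k : ℚ) / 2 ^ m}

/-!
For a dyadic rational `x` with denominator `2 ^ m` put `V x = (4 / 5) ^ m * φ ⌊x⌋`, where `φ` is
positive, and strictly concave and unbounded on each side of `[0, 2)`. Off `[0, 2)` the walk only
moves by `±1` or stays put, so there concavity makes `V` strictly superharmonic; on `[0, 2)` this
comes from the halving, which multiplies `V` by about `4 / 5`, and from the drop of `φ` at `1`.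

Supermartingale convergence shows that almost surely `V` stays bounded along the walk. Moreover
the strictly positive drift of `V` is almost surely summable along the walk, so no state is visited
infinitely often. Only finitely many dyadic rationals have both bounded denominator and bounded
`V`, so the denominators tend to infinity.
-/

section SupermartingaleBound

variable {Ω : Type*} {m₀ : MeasurableSpace Ω} {μ : Measure Ω} [IsFiniteMeasure μ]
  {ℱ : Filtration ℕ m₀} {f : ℕ → Ω → ℝ}

theorem eLpNorm_one_le_of_supermartingale_of_nonneg (hf : Supermartingale f ℱ μ)
    (hnonneg : ∀ n ω, 0 ≤ f n ω) (n : ℕ) :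
    eLpNorm (f n) 1 μ ≤ ENNReal.ofReal (∫ ω, f 0 ω ∂μ) := by
  rw [eLpNorm_one_eq_lintegral_enorm, ← ofReal_integral_norm_eq_lintegral_enorm (hf.integrable n)]
  have hnorm : ∫ ω, ‖f n ω‖ ∂μ = ∫ ω, f n ω ∂μ := by
    simp only [Real.norm_of_nonneg (hnonneg n _)]
  rw [hnorm]
  refine ENNReal.ofReal_le_ofReal ?_
  simpa only [Measure.restrict_univ] using hf.setIntegral_le n.zero_le MeasurableSet.univ

theorem ae_bddAbove_range_of_supermartingale_of_nonneg (hf : Supermartingale f ℱ μ)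
    (hnonneg : ∀ n ω, 0 ≤ f n ω) : ∀ᵐ ω ∂μ, BddAbove (Set.range fun n => f n ω) := by
  have hbdd (n : ℕ) : eLpNorm ((-f) n) 1 μ ≤ (∫ ω, f 0 ω ∂μ).toNNReal := by
    rw [Pi.neg_apply, eLpNorm_neg]
    exact eLpNorm_one_le_of_supermartingale_of_nonneg hf hnonneg n
  filter_upwards [hf.neg.exists_ae_tendsto_of_bdd hbdd] with ω ⟨c, hc⟩
  simpa only [Pi.neg_apply, neg_neg] using hc.neg.bddAbove_range

end SupermartingaleBound

section UniformLetters

variable {Ω α : Type*}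

/-- The first `n` letters of the random sequence `s`, as a word. -/
def prefixWord (s : ℕ → Ω → α) (n : ℕ) (ω : Ω) : Fin n → α := fun i => s i ω

theorem init_prefixWord_succ (s : ℕ → Ω → α) (n : ℕ) (ω : Ω) :
    Fin.init (prefixWord s (n + 1) ω) = prefixWord s n ω := rfl

theorem sum_filter_init_mem [Fintype α] [DecidableEq α] {n : ℕ} (B : Finset (Fin n → α))
    (g : (Fin (n + 1) → α) → ℝ) :
    ∑ w with (Fin.init w : Fin n → α) ∈ B, g w = ∑ w ∈ B, ∑ a, g (Fin.snoc w a) := by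
  rw [Finset.sum_filter, ← (Fin.snocEquiv fun _ => α).sum_comp, Fintype.sum_prod_type_right]
  simp [Fin.snocEquiv]

variable [MeasurableSpace Ω] [MeasurableSpace α]

theorem measurable_prefixWord {s : ℕ → Ω → α} (hs : ∀ n, Measurable (s n)) (n : ℕ) :
    Measurable (prefixWord s n) :=
  measurable_pi_lambda _ fun i => hs i

/-- The filtration whose `n`-th term is generated by the letters `s 0, …, s (n - 1)`.  Unlike
`Filtration.natural`, it excludes the letter `s n`, which drives the `n`-th step of a walk. -/
def prefixFiltration {s : ℕ → Ω → α} (hs : ∀ n, Measurable (s n)) :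
    Filtration ℕ (inferInstance : MeasurableSpace Ω) where
  seq n := MeasurableSpace.comap (prefixWord s n) inferInstance
  mono' m n hmn := by
    have hcomap : prefixWord s m = (fun w i => w (Fin.castLE hmn i)) ∘ prefixWord s n := rfl
    beta_reduce
    rw [hcomap, ← MeasurableSpace.comap_comp]
    exact MeasurableSpace.comap_mono
      (measurable_pi_lambda _ fun i => measurable_pi_apply _).comap_le
  le' n := (measurable_prefixWord hs n).comap_le

/-- A sequence of independent, uniformly distributed letters of a finite alphabet.  The joint law
is prescribed on words: each word of length `n` is an initial word of the sequence with
probability `(#α)⁻ⁿ`. -/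
structure IsUniformIID [Fintype α] (s : ℕ → Ω → α) (P : Measure Ω) : Prop where
  measurable (n : ℕ) : Measurable (s n)
  measure_prefixWord_eq (n : ℕ) (w : Fin n → α) :
    P {ω | prefixWord s n ω = w} = (Fintype.card α : ENNReal)⁻¹ ^ n

variable [Fintype α] {s : ℕ → Ω → α} {P : Measure Ω}

theorem IsUniformIID.isProbabilityMeasure (hs : IsUniformIID s P) : IsProbabilityMeasure P where
  measure_univ := by
    simpa only [Subsingleton.elim _ (finZeroElim : Fin 0 → α), Set.ofPred_true, pow_zero]
      using hs.measure_prefixWord_eq 0 finZeroElim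

theorem IsUniformIID.nonempty_alphabet (hs : IsUniformIID s P) : Nonempty α :=
  have := hs.isProbabilityMeasure
  P.nonempty_of_neZero.map (s 0)

variable [MeasurableSingletonClass α]

theorem integrable_comp_prefixWord (hs : IsUniformIID s P) {n : ℕ} (g : (Fin n → α) → ℝ) :
    Integrable (fun ω => g (prefixWord s n ω)) P :=
  have := hs.isProbabilityMeasure
  (Integrable.of_finite (μ := P.map (prefixWord s n))).comp_measurable
    (measurable_prefixWord hs.measurable n)

theorem setIntegral_comp_prefixWord (hs : IsUniformIID s P) {n : ℕ} (B : Finset (Fin n → α))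
    (g : (Fin n → α) → ℝ) :
    ∫ ω in prefixWord s n ⁻¹' B, g (prefixWord s n ω) ∂P
      = (Fintype.card α : ℝ)⁻¹ ^ n * ∑ w ∈ B, g w := by
  have := hs.isProbabilityMeasure
  have hmeas := measurable_prefixWord hs.measurable n
  have hword (w : Fin n → α) :
      (P.map (prefixWord s n)).real {w} = (Fintype.card α : ℝ)⁻¹ ^ n := by
    rw [map_measureReal_apply hmeas (measurableSet_singleton w), Measure.real]
    change (P {ω | prefixWord s n ω = w}).toReal = _
    simp [hs.measure_prefixWord_eq]
  rw [← setIntegral_map B.measurableSet (measurable_of_finite g).aestronglyMeasurable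
    hmeas.aemeasurable, setIntegral_finset _ Integrable.of_finite.integrableOn]
  simp only [hword, smul_eq_mul, Finset.mul_sum]

theorem supermartingale_comp_prefixWord (hs : IsUniformIID s P)
    {f : ∀ n, (Fin n → α) → ℝ}
    (hf : ∀ n w, ∑ a, f (n + 1) (Fin.snoc w a) ≤ Fintype.card α * f n w) :
    Supermartingale (fun n ω => f n (prefixWord s n ω)) (prefixFiltration hs.measurable) P := by
  classical
  have := hs.isProbabilityMeasure
  have := hs.nonempty_alphabet
  refine supermartingale_of_setIntegral_succ_le
    (fun n => ((measurable_of_finite (f n)).comp (comap_measurable _)).stronglyMeasurable)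
    (fun n => integrable_comp_prefixWord hs (f n)) ?_
  rintro n _ ⟨B, -, rfl⟩
  obtain ⟨B, rfl⟩ := B.toFinite.exists_finset_coe
  have hpreimage : prefixWord s n ⁻¹' B =
      prefixWord s (n + 1) ⁻¹' ({w | Fin.init w ∈ B} : Finset (Fin (n + 1) → α)) := by
    ext ω
    simp [init_prefixWord_succ]
  calc ∫ ω in prefixWord s n ⁻¹' B, f (n + 1) (prefixWord s (n + 1) ω) ∂P
      = (Fintype.card α : ℝ)⁻¹ ^ (n + 1) * ∑ w ∈ B, ∑ a, f (n + 1) (Fin.snoc w a) := by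
        rw [hpreimage, setIntegral_comp_prefixWord hs, sum_filter_init_mem]
    _ ≤ (Fintype.card α : ℝ)⁻¹ ^ (n + 1) * ∑ w ∈ B, Fintype.card α * f n w := by
        gcongr with w
        exact hf n w
    _ = (Fintype.card α : ℝ)⁻¹ ^ n * ∑ w ∈ B, f n w := by
        rw [← Finset.mul_sum, pow_succ, mul_assoc,
          inv_mul_cancel_left₀ (Nat.cast_ne_zero.2 Fintype.card_ne_zero)]
    _ = ∫ ω in prefixWord s n ⁻¹' B, f n (prefixWord s n ω) ∂P :=
        (setIntegral_comp_prefixWord hs B (f n)).symm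

end UniformLetters

section DrivenWalk

variable {α E : Type*} (step : α → E → E) (x₀ : E)

/-- The state reached from `x₀` by applying the moves prescribed by the letters of `w`, in order.
Along the initial words of a random sequence of letters this is a random walk on `E`. -/
def wordWalk {n : ℕ} (w : Fin n → α) : E :=
  Fin.foldl n (fun x i => step (w i) x) x₀

variable {step x₀}

theorem wordWalk_succ {n : ℕ} (w : Fin (n + 1) → α) :
    wordWalk step x₀ w = step (w (Fin.last n)) (wordWalk step x₀ (Fin.init w)) :=
  Fin.foldl_succ_last _ _

theorem wordWalk_mem {S : Set E} (hS : ∀ a, Set.MapsTo (step a) S S) (hx₀ : x₀ ∈ S) {n : ℕ}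
    (w : Fin n → α) : wordWalk step x₀ w ∈ S := by
  induction n with
  | zero => simpa [wordWalk] using hx₀
  | succ n ih =>
    rw [wordWalk_succ]
    exact hS _ (ih _)

variable {Ω : Type*} {s : ℕ → Ω → α}

theorem wordWalk_prefixWord_accumulate (D : E → ℝ) (n : ℕ) (ω : Ω) :
    wordWalk (fun a (p : E × ℝ) => (step a p.1, p.2 + D p.1)) (x₀, 0) (prefixWord s n ω) =
      (wordWalk step x₀ (prefixWord s n ω),
        ∑ k ∈ Finset.range n, D (wordWalk step x₀ (prefixWord s k ω))) := by
  induction n with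
  | zero => simp [wordWalk]
  | succ n ih =>
    simp only [wordWalk_succ, init_prefixWord_succ, ih, Finset.sum_range_succ]

variable [MeasurableSpace Ω] [Fintype α] [MeasurableSpace α] [MeasurableSingletonClass α]
  {P : Measure Ω} {S : Set E} {V : E → ℝ}

theorem ae_bddAbove_range_of_superharmonicOn (hs : IsUniformIID s P)
    (hS : ∀ a, Set.MapsTo (step a) S S) (hx₀ : x₀ ∈ S) (hV : ∀ x ∈ S, 0 ≤ V x)
    (hsuper : ∀ x ∈ S, ∑ a, V (step a x) ≤ Fintype.card α * V x) :
    ∀ᵐ ω ∂P, BddAbove (Set.range fun n => V (wordWalk step x₀ (prefixWord s n ω))) := by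
  have := hs.isProbabilityMeasure
  refine ae_bddAbove_range_of_supermartingale_of_nonneg
    (supermartingale_comp_prefixWord (f := fun _ w => V (wordWalk step x₀ w)) hs fun n w => ?_)
    fun n ω => hV _ (wordWalk_mem hS hx₀ _)
  simpa only [wordWalk_succ, Fin.snoc_last, Fin.init_snoc] using
    hsuper _ (wordWalk_mem hS hx₀ w)

theorem ae_bddAbove_range_and_summable_of_drift (hs : IsUniformIID s P)
    (hS : ∀ a, Set.MapsTo (step a) S S) (hx₀ : x₀ ∈ S) (hV : ∀ x ∈ S, 0 ≤ V x)
    {D : E → ℝ} (hD : ∀ x ∈ S, 0 ≤ D x)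
    (hdrift : ∀ x ∈ S, ∑ a, V (step a x) ≤ Fintype.card α * (V x - D x)) :
    ∀ᵐ ω ∂P, BddAbove (Set.range fun n => V (wordWalk step x₀ (prefixWord s n ω))) ∧
      Summable fun n => D (wordWalk step x₀ (prefixWord s n ω)) := by
  -- Recording the accumulated drift `t` in the state makes `V x + t` superharmonic.
  have hbdd := ae_bddAbove_range_of_superharmonicOn (E := E × ℝ) (x₀ := (x₀, 0))
    (step := fun a p => (step a p.1, p.2 + D p.1)) (S := S ×ˢ Set.Ici 0)
    (V := fun p => V p.1 + p.2) hs
    (fun a p hp => ⟨hS a hp.1, add_nonneg hp.2 (hD _ hp.1)⟩) ⟨hx₀, Set.self_mem_Ici⟩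
    (fun p hp => add_nonneg (hV _ hp.1) hp.2) fun p hp => by
      simp only [Finset.sum_add_distrib, Finset.sum_const, Finset.card_univ, nsmul_eq_mul]
      linarith [hdrift _ hp.1]
  filter_upwards [hbdd] with ω ⟨K, hK⟩
  have hmem (n : ℕ) := wordWalk_mem hS hx₀ (prefixWord s n ω)
  have hle (n : ℕ) : V (wordWalk step x₀ (prefixWord s n ω)) +
      ∑ k ∈ Finset.range n, D (wordWalk step x₀ (prefixWord s k ω)) ≤ K := by
    simpa only [wordWalk_prefixWord_accumulate] using hK ⟨n, rfl⟩
  constructor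
  · refine ⟨K, Set.forall_mem_range.2 fun n => ?_⟩
    exact (le_add_of_nonneg_right (Finset.sum_nonneg fun k _ => hD _ (hmem k))).trans (hle n)
  · refine summable_of_sum_range_le (c := K) (fun n => hD _ (hmem n)) fun n => ?_
    exact (le_add_of_nonneg_left (hV _ (hmem n))).trans (hle n)

theorem ae_bddAbove_range_and_tendsto_cofinite_of_strictSuperharmonicOn (hs : IsUniformIID s P)
    (hS : ∀ a, Set.MapsTo (step a) S S) (hx₀ : x₀ ∈ S) (hV : ∀ x ∈ S, 0 ≤ V x)
    (hsuper : ∀ x ∈ S, ∑ a, V (step a x) < Fintype.card α * V x) :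
    ∀ᵐ ω ∂P, BddAbove (Set.range fun n => V (wordWalk step x₀ (prefixWord s n ω))) ∧
      Tendsto (fun n => wordWalk step x₀ (prefixWord s n ω)) atTop cofinite := by
  let D (x : E) : ℝ := V x - (∑ a, V (step a x)) / Fintype.card α
  have hcard {x : E} (hx : x ∈ S) : (0 : ℝ) < Fintype.card α :=
    pos_of_mul_pos_left ((Finset.sum_nonneg fun a _ => hV _ (hS a hx)).trans_lt (hsuper x hx))
      (hV x hx)
  have hD (x : E) (hx : x ∈ S) : 0 < D x :=
    sub_pos.2 <| (div_lt_iff₀' (hcard hx)).2 (hsuper x hx)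
  filter_upwards [ae_bddAbove_range_and_summable_of_drift hs hS hx₀ hV
    (fun x hx => (hD x hx).le) fun x hx => by
      simp only [D, sub_sub_cancel, mul_div_cancel₀ _ (hcard hx).ne', le_refl]]
    with ω ⟨hbdd, hsum⟩
  refine ⟨hbdd, le_cofinite_iff_eventually_ne.2 fun x => eventually_map.2 ?_⟩
  by_cases hx : x ∈ S
  · filter_upwards [hsum.tendsto_atTop_zero.eventually_lt_const (hD x hx)] with n hn hxn
    exact hn.ne (congrArg D hxn)
  · exact .of_forall fun n hxn => hx (hxn ▸ wordWalk_mem hS hx₀ _)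

end DrivenWalk

section DyadicDepth

/-- The exponent `m` of the denominator `2 ^ m` of a dyadic rational in lowest terms, extended to
all rationals as the negative part of the `2`-adic valuation; it is `0` at `0`. -/
def dyadicDepth (x : ℚ) : ℕ := (-padicValRat 2 x).toNat

theorem ne_zero_of_dyadicDepth_pos {x : ℚ} (hx : 0 < dyadicDepth x) : x ≠ 0 := by
  rintro rfl
  simp [dyadicDepth] at hx

theorem padicNorm_eq_two_pow_dyadicDepth {x : ℚ} (hx : 0 < dyadicDepth x) :
    padicNorm 2 x = 2 ^ dyadicDepth x := by
  have hdepth : -padicValRat 2 x = dyadicDepth x := by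
    unfold dyadicDepth at hx ⊢
    lia
  rw [padicNorm.eq_zpow_of_nonzero (ne_zero_of_dyadicDepth_pos hx), hdepth,
    zpow_natCast, Nat.cast_ofNat]

theorem dyadicDepth_intCast (n : ℤ) : dyadicDepth n = 0 := by
  simp [dyadicDepth]

theorem padicValRat_two_mul {x : ℚ} (hx : x ≠ 0) :
    padicValRat 2 (2 * x) = padicValRat 2 x + 1 := by
  have hself : padicValRat 2 2 = 1 := by exact_mod_cast padicValRat.self one_lt_two
  rw [padicValRat.mul two_ne_zero hx, hself, add_comm]

theorem dyadicDepth_two_mul (x : ℚ) : dyadicDepth (2 * x) = dyadicDepth x - 1 := by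
  rcases eq_or_ne x 0 with rfl | hx
  · simp [dyadicDepth]
  · unfold dyadicDepth
    rw [padicValRat_two_mul hx]
    lia

theorem dyadicDepth_div_two {x : ℚ} (hx : x ≠ 0) (hval : padicValRat 2 x ≤ 0) :
    dyadicDepth (x / 2) = dyadicDepth x + 1 := by
  have hhalf := padicValRat_two_mul (div_ne_zero hx two_ne_zero)
  rw [mul_div_cancel₀ x two_ne_zero] at hhalf
  unfold dyadicDepth
  omega

theorem dyadicDepth_div_two_of_pos {x : ℚ} (hx : 0 < dyadicDepth x) :
    dyadicDepth (x / 2) = dyadicDepth x + 1 := by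
  refine dyadicDepth_div_two (ne_zero_of_dyadicDepth_pos hx) ?_
  unfold dyadicDepth at hx
  lia

theorem dyadicDepth_one_div_two : dyadicDepth (1 / 2) = 1 := by
  rw [dyadicDepth_div_two one_ne_zero padicValRat.one.le, ← Int.cast_one, dyadicDepth_intCast]

theorem dyadicDepth_add_intCast_le (x : ℚ) (n : ℤ) : dyadicDepth (x + n) ≤ dyadicDepth x := by
  by_cases hsum : x + n = 0
  · simp [dyadicDepth, hsum]
  · have hmin := padicValRat.min_le_padicValRat_add (p := 2) hsum
    have hint : 0 ≤ padicValRat 2 (n : ℚ) := by simp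
    unfold dyadicDepth
    lia

theorem dyadicDepth_add_intCast (x : ℚ) (n : ℤ) : dyadicDepth (x + n) = dyadicDepth x := by
  refine (dyadicDepth_add_intCast_le x n).antisymm ?_
  simpa using dyadicDepth_add_intCast_le (x + n) (-n)

theorem add_intCast_mem_dyadicQ {x : ℚ} (hx : x ∈ DyadicQ) (n : ℤ) : x + n ∈ DyadicQ := by
  obtain ⟨k, m, rfl⟩ := hx
  exact ⟨k + n * 2 ^ m, m, by push_cast; field_simp⟩

theorem div_two_mem_dyadicQ {x : ℚ} (hx : x ∈ DyadicQ) : x / 2 ∈ DyadicQ := by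
  obtain ⟨k, m, rfl⟩ := hx
  exact ⟨k, m + 1, by rw [pow_succ, div_div]⟩

theorem two_mul_mem_dyadicQ {x : ℚ} (hx : x ∈ DyadicQ) : 2 * x ∈ DyadicQ := by
  obtain ⟨k, m, rfl⟩ := hx
  exact ⟨2 * k, m, by push_cast; rw [mul_div_assoc]⟩

theorem exists_eq_intCast_of_dyadicDepth_eq_zero {x : ℚ} (hx : x ∈ DyadicQ)
    (hdepth : dyadicDepth x = 0) : ∃ n : ℤ, x = n := by
  obtain ⟨k, m, hk⟩ := hx
  induction m generalizing x with
  | zero => exact ⟨k, by simpa using hk⟩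
  | succ m ih =>
    obtain ⟨j, hj⟩ : ∃ j : ℤ, 2 * x = j :=
      ih (by rw [dyadicDepth_two_mul, hdepth]) (by rw [hk, pow_succ]; field_simp)
    rcases Int.even_or_odd' j with ⟨i, rfl | rfl⟩
    · exact ⟨i, mul_left_cancel₀ two_ne_zero (by rw [hj]; push_cast; rfl)⟩
    · have hx : x = 1 / 2 + i := by
        push_cast at hj
        linarith
      rw [hx, dyadicDepth_add_intCast, dyadicDepth_one_div_two] at hdepth
      exact absurd hdepth one_ne_zero

theorem exists_eq_div_two_pow_of_dyadicDepth_le {x : ℚ} (hx : x ∈ DyadicQ) {m : ℕ}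
    (hdepth : dyadicDepth x ≤ m) : ∃ k : ℤ, x = k / 2 ^ m := by
  induction m generalizing x with
  | zero => simpa using exists_eq_intCast_of_dyadicDepth_eq_zero hx (Nat.le_zero.1 hdepth)
  | succ m ih =>
    obtain ⟨k, hk⟩ := ih (two_mul_mem_dyadicQ hx) (by rw [dyadicDepth_two_mul]; lia)
    exact ⟨k, by rw [pow_succ, ← div_div, ← hk]; ring⟩

theorem finite_dyadicQ_of_dyadicDepth_le_of_floor_mem {A : Set ℤ} (hA : A.Finite) (m : ℕ) :
    {x ∈ DyadicQ | dyadicDepth x ≤ m ∧ ⌊x⌋ ∈ A}.Finite := by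
  refine (hA.biUnion fun n _ => (Set.finite_Icc (n * 2 ^ m) ((n + 1) * 2 ^ m)).image
    fun k : ℤ => (k : ℚ) / 2 ^ m).subset ?_
  rintro x ⟨hx, hdepth, hfloor⟩
  obtain ⟨k, rfl⟩ := exists_eq_div_two_pow_of_dyadicDepth_le hx hdepth
  refine Set.mem_biUnion hfloor ⟨k, ⟨?_, ?_⟩, rfl⟩
  · have hle := (le_div_iff₀ (by positivity)).1 (Int.floor_le ((k : ℚ) / 2 ^ m))
    exact_mod_cast hle
  · have hlt := (div_lt_iff₀ (by positivity)).1 (Int.lt_floor_add_one ((k : ℚ) / 2 ^ m))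
    exact_mod_cast hlt.le

end DyadicDepth

section Moves

variable {x : ℚ}

theorem stepQ_zero (x : ℚ) : stepQ 0 x = x - 1 := rfl

theorem stepQ_one (x : ℚ) : stepQ 1 x = x + 1 := rfl

theorem stepQ_two_of_nonpos (hx : x ≤ 0) : stepQ 2 x = x := if_pos hx

theorem stepQ_two_of_mem_Ioc (hx : x ∈ Set.Ioc 0 2) : stepQ 2 x = x / 2 := by
  simp only [stepQ, if_neg hx.1.not_ge, if_pos hx.2]

theorem stepQ_two_of_two_le (hx : 2 ≤ x) : stepQ 2 x = x - 1 := by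
  simp only [stepQ]
  split_ifs <;> linarith

theorem stepQ_three_of_nonpos (hx : x ≤ 0) : stepQ 3 x = x := if_pos hx

theorem stepQ_three_of_mem_Ioc (hx : x ∈ Set.Ioc 0 1) : stepQ 3 x = 2 * x := by
  simp only [stepQ, if_neg hx.1.not_ge, if_pos hx.2]

theorem stepQ_three_of_one_le (hx : 1 ≤ x) : stepQ 3 x = x + 1 := by
  simp only [stepQ]
  split_ifs <;> linarith

theorem mapsTo_stepQ_dyadicQ (i : Fin 4) : Set.MapsTo (stepQ i) DyadicQ DyadicQ := by
  intro x hx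
  have hadd : x + 1 ∈ DyadicQ := by simpa using add_intCast_mem_dyadicQ hx 1
  have hsub : x - 1 ∈ DyadicQ := by simpa [sub_eq_add_neg] using add_intCast_mem_dyadicQ hx (-1)
  have hdiv := div_two_mem_dyadicQ hx
  have hmul := two_mul_mem_dyadicQ hx
  fin_cases i <;> simp only [stepQ] <;> (try split_ifs) <;> assumption

theorem walkQ_eq_wordWalk (c : ℕ → Fin 4) (γ₀ : ℚ) (n : ℕ) :
    walkQ c γ₀ n = wordWalk stepQ γ₀ fun i : Fin n => c i := by
  induction n with
  | zero => simp [walkQ, wordWalk]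
  | succ n ih =>
    rw [walkQ, ih, wordWalk_succ]
    rfl

end Moves

section Potential

theorem harmonic_add_harmonic_add_two_lt (k : ℕ) :
    harmonic k + harmonic (k + 2) < 2 * harmonic (k + 1) := by
  have hinv : ((k + 2 : ℕ) : ℚ)⁻¹ < ((k + 1 : ℕ) : ℚ)⁻¹ := by gcongr; lia
  rw [harmonic_succ (k + 1), harmonic_succ k]
  linarith

theorem tendsto_harmonic_atTop : Tendsto (fun k => (harmonic k : ℝ)) atTop atTop :=
  tendsto_atTop_mono log_add_one_le_harmonic <|
    Real.tendsto_log_atTop.comp (tendsto_natCast_atTop_atTop.comp (tendsto_add_atTop_nat 1))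

theorem harmonic_nonneg (k : ℕ) : 0 ≤ harmonic k :=
  Finset.sum_nonneg fun i _ => by positivity

/-- The dependence of `dyadicPotential` on the integer part. It is strictly concave and unbounded
on either side of the interval `[0, 2)`, where the vertices of `Γ` branch. -/
def floorPotential (n : ℤ) : ℝ := (if n ≤ 0 then 1 else 9 / 10) + harmonic n.natAbs / 100

/-- A strictly superharmonic function for the simple random walk on `Γ`.  With `r = 4 / 5` and
`c = 9 / 10`, strictness on `(0, 1)` and on `[1, 2)` amounts, up to the small harmonic term of
`floorPotential`, to `1 + c + r + r⁻¹ < 4` and `1 + r ≤ 2 * c`; the harmonic term absorbs the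
equality in the latter. -/
def dyadicPotential (x : ℚ) : ℝ := (4 / 5) ^ dyadicDepth x * floorPotential ⌊x⌋

theorem harmonic_natAbs_le_floorPotential (n : ℤ) :
    (harmonic n.natAbs : ℝ) / 100 ≤ floorPotential n :=
  le_add_of_nonneg_left (by split_ifs <;> norm_num)

theorem floorPotential_nonneg (n : ℤ) : 0 ≤ floorPotential n :=
  (div_nonneg (Rat.cast_nonneg.2 (harmonic_nonneg _)) (by norm_num)).trans
    (harmonic_natAbs_le_floorPotential n)

theorem dyadicPotential_nonneg (x : ℚ) : 0 ≤ dyadicPotential x :=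
  mul_nonneg (by positivity) (floorPotential_nonneg _)

theorem finite_floorPotential_le (K : ℝ) : {n : ℤ | floorPotential n ≤ K}.Finite := by
  obtain ⟨N, hN⟩ := (tendsto_harmonic_atTop.eventually_gt_atTop (100 * K)).exists_forall_of_atTop
  refine (Set.finite_Icc (-N : ℤ) N).subset fun n hn => ?_
  have hlt : n.natAbs < N := by
    by_contra! hle
    linarith [hN _ hle, harmonic_natAbs_le_floorPotential n, Set.mem_ofPred.1 hn]
  exact ⟨by lia, by lia⟩

theorem finite_dyadicQ_of_dyadicDepth_le_of_dyadicPotential_le (m : ℕ) (K : ℝ) :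
    {x ∈ DyadicQ | dyadicDepth x ≤ m ∧ dyadicPotential x ≤ K}.Finite := by
  refine (finite_dyadicQ_of_dyadicDepth_le_of_floor_mem
    (finite_floorPotential_le (K / (4 / 5) ^ m)) m).subset ?_
  rintro x ⟨hx, hdepth, hK⟩
  refine ⟨hx, hdepth, (le_div_iff₀' (by positivity)).2 (le_trans ?_ hK)⟩
  exact mul_le_mul_of_nonneg_right
    (pow_le_pow_of_le_one (by norm_num) (by norm_num) hdepth) (floorPotential_nonneg _)

theorem floorPotential_neg_one : floorPotential (-1) = 101 / 100 := by
  norm_num [floorPotential, harmonic]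

theorem floorPotential_zero : floorPotential 0 = 1 := by
  norm_num [floorPotential]

theorem floorPotential_one : floorPotential 1 = 91 / 100 := by
  norm_num [floorPotential, harmonic]

theorem floorPotential_two : floorPotential 2 = 183 / 200 := by
  norm_num [floorPotential, harmonic, Finset.sum_range_succ]

theorem floorPotential_sub_one_add_add_one_lt {n : ℤ} (hn : n < 0 ∨ 1 < n) :
    floorPotential (n - 1) + floorPotential (n + 1) < 2 * floorPotential n := by
  obtain ⟨k, hk⟩ : ∃ k : ℕ, n.natAbs = k + 1 := ⟨n.natAbs - 1, by lia⟩
  have hconcave : (harmonic k : ℝ) + harmonic (k + 2) < 2 * harmonic (k + 1) := by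
    exact_mod_cast harmonic_add_harmonic_add_two_lt k
  unfold floorPotential
  rcases hn with hn | hn
  · rw [if_pos (by lia), if_pos (by lia), if_pos (by lia), hk,
      show (n - 1).natAbs = k + 2 by lia, show (n + 1).natAbs = k by lia]
    linarith
  · rw [if_neg (by lia), if_neg (by lia), if_neg (by lia), hk,
      show (n - 1).natAbs = k by lia, show (n + 1).natAbs = k + 2 by lia]
    linarith

theorem dyadicPotential_add_intCast (x : ℚ) (n : ℤ) :
    dyadicPotential (x + n) = (4 / 5) ^ dyadicDepth x * floorPotential (⌊x⌋ + n) := by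
  rw [dyadicPotential, dyadicDepth_add_intCast, Int.floor_add_intCast]

theorem dyadicPotential_add_one (x : ℚ) :
    dyadicPotential (x + 1) = (4 / 5) ^ dyadicDepth x * floorPotential (⌊x⌋ + 1) := by
  simpa only [Int.cast_one] using dyadicPotential_add_intCast x 1

theorem dyadicPotential_sub_one (x : ℚ) :
    dyadicPotential (x - 1) = (4 / 5) ^ dyadicDepth x * floorPotential (⌊x⌋ - 1) := by
  simpa only [Int.cast_neg, Int.cast_one, ← sub_eq_add_neg] using dyadicPotential_add_intCast x (-1)

theorem dyadicPotential_div_two {x : ℚ} (hx : x ∈ Set.Ioo 0 2)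
    (hdepth : dyadicDepth (x / 2) = dyadicDepth x + 1) :
    dyadicPotential (x / 2) = 4 / 5 * (4 / 5) ^ dyadicDepth x := by
  have hfloor : ⌊x / 2⌋ = 0 := Int.floor_eq_zero_iff.2 ⟨by linarith [hx.1], by linarith [hx.2]⟩
  rw [dyadicPotential, hfloor, floorPotential_zero, hdepth, pow_succ', mul_one]

theorem dyadicPotential_two_mul_le {x : ℚ} (hx : x ∈ Set.Ico 0 1) (hdepth : 0 < dyadicDepth x) :
    dyadicPotential (2 * x) ≤ 5 / 4 * (4 / 5) ^ dyadicDepth x := by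
  have hfloor : ⌊2 * x⌋ = 0 ∨ ⌊2 * x⌋ = 1 := by
    have hnonneg : 0 ≤ ⌊2 * x⌋ := Int.floor_nonneg.2 (by linarith [hx.1])
    have hlt : ⌊2 * x⌋ < 2 := Int.floor_lt.2 (by push_cast; linarith [hx.2])
    lia
  have hle : floorPotential ⌊2 * x⌋ ≤ 1 := by
    rcases hfloor with h | h <;> norm_num [h, floorPotential_zero, floorPotential_one]
  obtain ⟨d, hd⟩ : ∃ d, dyadicDepth x = d + 1 := ⟨dyadicDepth x - 1, by lia⟩
  calc dyadicPotential (2 * x)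
      = (4 / 5) ^ d * floorPotential ⌊2 * x⌋ := by
        rw [dyadicPotential, dyadicDepth_two_mul, hd, Nat.add_sub_cancel]
    _ ≤ (4 / 5) ^ d * 1 := by gcongr
    _ = 5 / 4 * (4 / 5) ^ dyadicDepth x := by rw [hd, pow_succ]; ring

theorem dyadicPotential_sub_one_add_add_one_lt {x : ℚ} (hx : ⌊x⌋ < 0 ∨ 1 < ⌊x⌋) :
    dyadicPotential (x - 1) + dyadicPotential (x + 1) < 2 * dyadicPotential x := by
  rw [dyadicPotential_sub_one, dyadicPotential_add_one, dyadicPotential, ← mul_add, mul_left_comm]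
  gcongr
  exact floorPotential_sub_one_add_add_one_lt hx

end Potential

section Superharmonic

variable {x : ℚ}

theorem sum_dyadicPotential_stepQ_lt_of_neg (hx : x < 0) :
    ∑ i, dyadicPotential (stepQ i x) < 4 * dyadicPotential x := by
  have hconcave := dyadicPotential_sub_one_add_add_one_lt (x := x)
    (.inl (Int.floor_lt.2 (mod_cast hx)))
  rw [Fin.sum_univ_four, stepQ_zero, stepQ_one, stepQ_two_of_nonpos hx.le,
    stepQ_three_of_nonpos hx.le]
  linarith

theorem sum_dyadicPotential_stepQ_zero_lt :
    ∑ i, dyadicPotential (stepQ i 0) < 4 * dyadicPotential 0 := by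
  rw [Fin.sum_univ_four, stepQ_zero, stepQ_one, stepQ_two_of_nonpos le_rfl,
    stepQ_three_of_nonpos le_rfl, dyadicPotential_sub_one, dyadicPotential_add_one, dyadicPotential]
  norm_num [floorPotential_neg_one, floorPotential_zero, floorPotential_one, dyadicDepth]

theorem sum_dyadicPotential_stepQ_lt_of_mem_Ioo (hx : x ∈ Set.Ioo 0 1)
    (hdepth : 0 < dyadicDepth x) :
    ∑ i, dyadicPotential (stepQ i x) < 4 * dyadicPotential x := by
  have hfloor : ⌊x⌋ = 0 := Int.floor_eq_zero_iff.2 ⟨hx.1.le, hx.2⟩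
  have hpow : (0 : ℝ) < (4 / 5) ^ dyadicDepth x := by positivity
  have hhalf := dyadicPotential_div_two ⟨hx.1, by linarith [hx.2]⟩
    (dyadicDepth_div_two_of_pos hdepth)
  have hdouble := dyadicPotential_two_mul_le ⟨hx.1.le, hx.2⟩ hdepth
  have hself : dyadicPotential x = (4 / 5) ^ dyadicDepth x := by
    rw [dyadicPotential, hfloor, floorPotential_zero, mul_one]
  rw [Fin.sum_univ_four, stepQ_zero, stepQ_one, stepQ_two_of_mem_Ioc ⟨hx.1, by linarith [hx.2]⟩,
    stepQ_three_of_mem_Ioc ⟨hx.1, hx.2.le⟩, dyadicPotential_sub_one, dyadicPotential_add_one,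
    hhalf, hfloor, zero_sub, zero_add, floorPotential_neg_one, floorPotential_one]
  linarith

theorem sum_dyadicPotential_stepQ_lt_of_mem_Ico (hx : x ∈ Set.Ico 1 2)
    (hdepth : dyadicDepth (x / 2) = dyadicDepth x + 1) :
    ∑ i, dyadicPotential (stepQ i x) < 4 * dyadicPotential x := by
  have hpos : 0 < x := one_pos.trans_le hx.1
  have hfloor : ⌊x⌋ = 1 := Int.floor_eq_iff.2 ⟨by simpa using hx.1, by norm_num; exact hx.2⟩
  have hpow : (0 : ℝ) < (4 / 5) ^ dyadicDepth x := by positivity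
  rw [Fin.sum_univ_four, stepQ_zero, stepQ_one, stepQ_two_of_mem_Ioc ⟨hpos, hx.2.le⟩,
    stepQ_three_of_one_le hx.1, dyadicPotential_sub_one, dyadicPotential_add_one,
    dyadicPotential_div_two ⟨hpos, hx.2⟩ hdepth, dyadicPotential, hfloor, sub_self,
    one_add_one_eq_two, floorPotential_zero, floorPotential_one, floorPotential_two]
  linarith

theorem sum_dyadicPotential_stepQ_lt_of_two_le (hx : 2 ≤ x) :
    ∑ i, dyadicPotential (stepQ i x) < 4 * dyadicPotential x := by
  have hconcave := dyadicPotential_sub_one_add_add_one_lt (x := x)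
    (.inr (Int.le_floor.2 (mod_cast hx)))
  rw [Fin.sum_univ_four, stepQ_zero, stepQ_one, stepQ_two_of_two_le hx,
    stepQ_three_of_one_le (one_le_two.trans hx)]
  linarith

theorem sum_dyadicPotential_stepQ_lt (hx : x ∈ DyadicQ) :
    ∑ i, dyadicPotential (stepQ i x) < 4 * dyadicPotential x := by
  rcases lt_or_ge x 0 with hneg | hnonneg
  · exact sum_dyadicPotential_stepQ_lt_of_neg hneg
  rcases le_or_gt 2 x with htwo | htwo
  · exact sum_dyadicPotential_stepQ_lt_of_two_le htwo
  rcases Nat.eq_zero_or_pos (dyadicDepth x) with hdepth | hdepth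
  · obtain ⟨n, rfl⟩ := exists_eq_intCast_of_dyadicDepth_eq_zero hx hdepth
    norm_cast at hnonneg htwo
    obtain rfl | rfl : n = 0 ∨ n = 1 := by lia
    · simpa only [Int.cast_zero] using sum_dyadicPotential_stepQ_zero_lt
    · rw [Int.cast_one]
      exact sum_dyadicPotential_stepQ_lt_of_mem_Ico ⟨le_rfl, one_lt_two⟩
        (dyadicDepth_div_two one_ne_zero padicValRat.one.le)
  rcases lt_or_ge x 1 with hone | hone
  · exact sum_dyadicPotential_stepQ_lt_of_mem_Ioo
      ⟨hnonneg.lt_of_ne' (ne_zero_of_dyadicDepth_pos hdepth), hone⟩ hdepth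
  · exact sum_dyadicPotential_stepQ_lt_of_mem_Ico ⟨hone, htwo⟩ (dyadicDepth_div_two_of_pos hdepth)

end Superharmonic

section Divergence

theorem tendsto_dyadicDepth_atTop {u : ℕ → ℚ} (hu : ∀ n, u n ∈ DyadicQ)
    (hbdd : BddAbove (Set.range fun n => dyadicPotential (u n)))
    (hcof : Tendsto u atTop cofinite) : Tendsto (fun n => dyadicDepth (u n)) atTop atTop := by
  obtain ⟨K, hK⟩ := hbdd
  refine tendsto_atTop.2 fun m => ?_
  filter_upwards [hcof.eventually
    (finite_dyadicQ_of_dyadicDepth_le_of_dyadicPotential_le m K).eventually_cofinite_notMem]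
    with n hn
  by_contra! hlt
  exact hn ⟨hu n, hlt.le, hK ⟨n, rfl⟩⟩

theorem tendsto_padicNorm_atTop_of_tendsto_dyadicDepth {ι : Type*} {l : Filter ι} {u : ι → ℚ}
    (hu : Tendsto (fun i => dyadicDepth (u i)) l atTop) :
    Tendsto (fun i => padicNorm 2 (u i)) l atTop := by
  refine ((tendsto_pow_atTop_atTop_of_one_lt one_lt_two).comp hu).congr' ?_
  filter_upwards [hu.eventually_gt_atTop 0] with i hi
  exact (padicNorm_eq_two_pow_dyadicDepth hi).symm

variable {Ω : Type*} [MeasurableSpace Ω] {P : Measure Ω} {s : ℕ → Ω → Fin 4}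

theorem isUniformIID_of_measure_cylinder (hmeas : ∀ n i, MeasurableSet {ω | s n ω = i})
    (hiid : ∀ (n : ℕ) (c : ℕ → Fin 4),
      P {ω | ∀ i < n, s i ω = c i} = (4 : ENNReal)⁻¹ ^ n) : IsUniformIID s P where
  measurable n := measurable_to_countable' (hmeas n)
  measure_prefixWord_eq n w := by
    have hcylinder : {ω | prefixWord s n ω = w} =
        {ω | ∀ i < n, s i ω = if h : i < n then w ⟨i, h⟩ else 0} := by
      ext ω
      simp +contextual [prefixWord, funext_iff, Fin.forall_iff]
    rw [hcylinder, hiid, Fintype.card_fin, Nat.cast_ofNat]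

theorem padicNorm_tendsto_atTop_of_simple_random_walk_general
    (hmeas : ∀ n i, MeasurableSet {ω | s n ω = i})
    (hiid : ∀ (n : ℕ) (c : ℕ → Fin 4),
      P {ω | ∀ i < n, s i ω = c i} = (4 : ENNReal)⁻¹ ^ n)
    {γ₀ : ℚ} (hγ₀ : γ₀ ∈ DyadicQ) :
    ∀ᵐ ω ∂P,
      Tendsto (fun n => padicNorm 2 (walkQ (fun i => s i ω) γ₀ n)) atTop atTop := by
  have hs := isUniformIID_of_measure_cylinder hmeas hiid
  filter_upwards [ae_bddAbove_range_and_tendsto_cofinite_of_strictSuperharmonicOn hs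
    mapsTo_stepQ_dyadicQ hγ₀ (fun x _ => dyadicPotential_nonneg x)
    fun x hx => by simpa using sum_dyadicPotential_stepQ_lt hx] with ω ⟨hbdd, hcof⟩
  simp only [walkQ_eq_wordWalk]
  exact tendsto_padicNorm_atTop_of_tendsto_dyadicDepth <|
    tendsto_dyadicDepth_atTop (fun n => wordWalk_mem mapsTo_stepQ_dyadicQ hγ₀ _) hbdd hcof

end Divergence

/-- Along almost every sample path of the simple random walk on the Schreier graph
`Γ ≅ ℤ[1/2]` started at `0`, the `2`-adic norm tends to infinity.  The probability space is
any space carrying an i.i.d. sequence `s` of uniformly distributed choices in `{1,2,3,4}`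
(i.e. the uniform product measure on `{1,2,3,4}^ℕ`). -/
theorem padicNorm_tendsto_atTop_of_simple_random_walk
    {Ω : Type*} [MeasurableSpace Ω] (P : Measure Ω) [IsProbabilityMeasure P]
    (s : ℕ → Ω → Fin 4)
    (hmeas : ∀ n i, MeasurableSet {ω | s n ω = i})
    (hiid : ∀ (n : ℕ) (c : ℕ → Fin 4),
      P {ω | ∀ i < n, s i ω = c i} = (4 : ENNReal)⁻¹ ^ n) :
    ∀ᵐ ω ∂P,
      Tendsto (fun n => padicNorm 2 (walkQ (fun i => s i ω) 0 n)) atTop atTop :=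
  padicNorm_tendsto_atTop_of_simple_random_walk_general hmeas hiid ⟨0, 0, by simp⟩
end
end

section
/- The simple random walk on the Schreier graph Γ ≅ ℤ[1/2] is transient: for every starting point γ₀ ∈ ℤ[1/2], almost surely every finite subset S ⊆ ℤ[1/2] is visited by the walk (γ_n) only finitely often. -/
/-!
A nonnegative superharmonic function `f` whose value drops strictly somewhere reachable from `y`
forces `y` to be transient: for `g = f ⊓ f y` some power of the Markov operator `M` satisfies
`M ^ k g y < g y`, and the telescoping bound `∑ n < N, M ^ n (g - M ^ k g) ≤ k • g` makes the Green
function `∑ n, M ^ n 1_y` finite, so that Borel–Cantelli applies.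

On the Schreier graph, the 2-adic level `ν` of the denominator yields such a function, essentially
`(3/4) ^ ν`. Translations preserve `ν`, and every rational has an integer translate in `(0, 2]` with
odd numerator; halving that translate raises `ν`.
-/

open MeasureTheory Filter

noncomputable section

section RandomIteration

variable {ι α : Type*} (T : ι → α → α)

/-- The trajectory of `x` under the successive maps `T (s 0)`, `T (s 1)`, …; for random `s` this is
the random walk generated by the family `T`. -/
def trajectory (s : ℕ → ι) (x : α) : ℕ → α
  | 0 => x
  | n + 1 => T (s n) (trajectory s x n)

lemma trajectory_succ' (s : ℕ → ι) (x : α) (n : ℕ) :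
    trajectory T s x (n + 1) = trajectory T (fun i ↦ s (i + 1)) (T (s 0) x) n := by
  induction n with
  | zero => rfl
  | succ n ih => rw [trajectory, ih, trajectory]

variable [Fintype ι]

/-- The Markov operator of the random walk that applies a uniformly chosen `T i` at each step,
acting on all real functions. The `n`-step transition probability from `x` to `y` is
`(markovOperator T ^ n) (Set.indicator {y} 1) x`. -/
def markovOperator : Module.End ℝ (α → ℝ) where
  toFun f x := (∑ i, f (T i x)) / Fintype.card ι
  map_add' f g := by
    ext x
    simp only [Pi.add_apply, Finset.sum_add_distrib, add_div]
  map_smul' c f := by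
    ext x
    simp only [Pi.smul_apply, smul_eq_mul, RingHom.id_apply, ← Finset.mul_sum, mul_div_assoc]

lemma markovOperator_apply (f : α → ℝ) (x : α) :
    markovOperator T f x = (∑ i, f (T i x)) / Fintype.card ι := rfl

lemma markovOperator_pow_succ_apply (n : ℕ) (f : α → ℝ) (x : α) :
    (markovOperator T ^ (n + 1)) f x =
      (∑ i, (markovOperator T ^ n) f (T i x)) / Fintype.card ι := by
  rw [pow_succ', Module.End.mul_apply, markovOperator_apply]

lemma markovOperator_mono : Monotone (markovOperator T) := fun f g hfg x ↦ by
  simp only [markovOperator_apply]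
  gcongr with i
  exact hfg (T i x)

lemma markovOperator_pow_mono (n : ℕ) : Monotone (markovOperator T ^ n) := by
  rw [Module.End.coe_pow]
  exact (markovOperator_mono T).iterate n

lemma markovOperator_pow_nonneg (n : ℕ) {f : α → ℝ} (hf : 0 ≤ f) :
    0 ≤ (markovOperator T ^ n) f := by
  simpa only [map_zero] using markovOperator_pow_mono T n hf

lemma markovOperator_const [Nonempty ι] (c : ℝ) :
    markovOperator T (Function.const α c) = Function.const α c := by
  ext x
  simp [markovOperator_apply]

variable {T}

lemma markovOperator_pow_le_self {f : α → ℝ} (hf : markovOperator T f ≤ f) (n : ℕ) :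
    (markovOperator T ^ n) f ≤ f := by
  rw [Module.End.coe_pow]
  exact (markovOperator_mono T).antitone_iterate_of_map_le hf (Nat.zero_le n)

lemma markovOperator_inf_le_inf {f g : α → ℝ} (hf : markovOperator T f ≤ f)
    (hg : markovOperator T g ≤ g) : markovOperator T (f ⊓ g) ≤ f ⊓ g :=
  le_inf ((markovOperator_mono T inf_le_left).trans hf)
    ((markovOperator_mono T inf_le_right).trans hg)

lemma exists_markovOperator_pow_lt {f : α → ℝ} (hf : markovOperator T f ≤ f) {c : ℝ}
    (hfc : ∀ x, f x ≤ c) {y z : α} (hyz : Relation.ReflTransGen (fun a b ↦ ∃ i, T i a = b) y z)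
    (hz : f z < c) : ∃ n, (markovOperator T ^ n) f y < c := by
  induction hyz using Relation.ReflTransGen.head_induction_on with
  | refl => exact ⟨0, by simpa using hz⟩
  | @head y _ hstep _ ih =>
    obtain ⟨i, rfl⟩ := hstep
    obtain ⟨n, hn⟩ := ih
    have hle (j : ι) : (markovOperator T ^ n) f (T j y) ≤ c :=
      (markovOperator_pow_le_self hf n _).trans (hfc _)
    have hsum : ∑ j, (markovOperator T ^ n) f (T j y) < ∑ _j : ι, c :=
      Finset.sum_lt_sum (fun j _ ↦ hle j) ⟨i, Finset.mem_univ i, hn⟩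
    have hcard : (0 : ℝ) < Fintype.card ι := by
      exact_mod_cast Fintype.card_pos_iff.mpr ⟨i⟩
    refine ⟨n + 1, ?_⟩
    rw [markovOperator_pow_succ_apply, div_lt_iff₀' hcard]
    simpa using hsum

lemma sum_markovOperator_pow_sub_le {f : α → ℝ} (hf₀ : 0 ≤ f) (hf : markovOperator T f ≤ f)
    (k N : ℕ) :
    ∑ n ∈ Finset.range N, (markovOperator T ^ n) (f - (markovOperator T ^ k) f) ≤ k • f := by
  set M := markovOperator T
  set G := ∑ j ∈ Finset.range k, M ^ j with hG
  have telescope : (∑ n ∈ Finset.range N, M ^ n) * (1 - M ^ k) = (1 - M ^ N) * G := by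
    rw [← mul_neg_geom_sum, ← mul_assoc, geom_sum_mul_neg]
  have hGf : 0 ≤ G f := by
    rw [hG, LinearMap.sum_apply]
    exact Finset.sum_nonneg fun j _ ↦ markovOperator_pow_nonneg T j hf₀
  calc ∑ n ∈ Finset.range N, (M ^ n) (f - (M ^ k) f)
      = ((∑ n ∈ Finset.range N, M ^ n) * (1 - M ^ k)) f := by
        simp only [Module.End.mul_apply, LinearMap.sum_apply, LinearMap.sub_apply,
          Module.End.one_apply]
    _ = G f - (M ^ N) (G f) := by
        rw [telescope, Module.End.mul_apply, LinearMap.sub_apply, Module.End.one_apply]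
    _ ≤ G f := sub_le_self _ (markovOperator_pow_nonneg T N hGf)
    _ = ∑ j ∈ Finset.range k, (M ^ j) f := LinearMap.sum_apply ..
    _ ≤ ∑ _j ∈ Finset.range k, f :=
        Finset.sum_le_sum fun j _ ↦ markovOperator_pow_le_self hf j
    _ = k • f := by rw [Finset.sum_const, Finset.card_range]

lemma summable_markovOperator_pow_of_pow_lt {f : α → ℝ} (hf₀ : 0 ≤ f)
    (hf : markovOperator T f ≤ f) {k : ℕ} {y : α} (hy : (markovOperator T ^ k) f y < f y) (x : α) :
    Summable fun n ↦ (markovOperator T ^ n) (Set.indicator {y} 1) x := by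
  set M := markovOperator T
  set ε := f y - (M ^ k) f y with hε
  have hε₀ : 0 < ε := sub_pos.mpr hy
  have drop : ε • Set.indicator {y} 1 ≤ f - (M ^ k) f := fun a ↦ by
    by_cases ha : a = y
    · simp [ha, hε]
    · simpa [ha] using markovOperator_pow_le_self hf k a
  have bound (N : ℕ) :
      ∑ n ∈ Finset.range N, ε * (M ^ n) (Set.indicator {y} 1) x ≤ (k • f) x :=
    calc ∑ n ∈ Finset.range N, ε * (M ^ n) (Set.indicator {y} 1) x
        = ∑ n ∈ Finset.range N, (M ^ n) (ε • Set.indicator {y} 1) x := by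
          simp only [map_smul, Pi.smul_apply, smul_eq_mul]
      _ ≤ ∑ n ∈ Finset.range N, (M ^ n) (f - (M ^ k) f) x :=
          Finset.sum_le_sum fun n _ ↦ markovOperator_pow_mono T n drop x
      _ ≤ (k • f) x := by
          simpa only [Finset.sum_apply] using sum_markovOperator_pow_sub_le hf₀ hf k N x
  have indicator_nonneg : (0 : α → ℝ) ≤ Set.indicator {y} 1 :=
    Set.indicator_nonneg fun _ _ ↦ zero_le_one
  refine (summable_mul_left_iff hε₀.ne').mp (summable_of_sum_range_le (fun n ↦ ?_) bound)
  exact mul_nonneg hε₀.le (markovOperator_pow_nonneg T n indicator_nonneg x)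

theorem summable_markovOperator_pow_of_superharmonic [Nonempty ι] {f : α → ℝ} (hf₀ : 0 ≤ f)
    (hf : markovOperator T f ≤ f) {y z : α}
    (hyz : Relation.ReflTransGen (fun a b ↦ ∃ i, T i a = b) y z) (hlt : f z < f y) (x : α) :
    Summable fun n ↦ (markovOperator T ^ n) (Set.indicator {y} 1) x := by
  set g : α → ℝ := f ⊓ Function.const α (f y)
  have hg : markovOperator T g ≤ g :=
    markovOperator_inf_le_inf hf (markovOperator_const T (f y)).le
  have hg₀ : 0 ≤ g := le_inf hf₀ fun _ ↦ hf₀ y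
  have hgy : g y = f y := inf_idem _
  obtain ⟨k, hk⟩ := exists_markovOperator_pow_lt hg (fun _ ↦ inf_le_right) hyz
    (inf_le_left.trans_lt hlt)
  exact summable_markovOperator_pow_of_pow_lt hg₀ hg (hk.trans_eq hgy.symm) x

variable (T) {Ω : Type*} [MeasurableSpace Ω] {P : Measure Ω} {s : ℕ → Ω → ι}

lemma ofReal_markovOperator_pow_succ_apply [Nonempty ι] (n : ℕ) {f : α → ℝ} (hf : 0 ≤ f) (x : α) :
    ENNReal.ofReal ((markovOperator T ^ (n + 1)) f x) =
      (Fintype.card ι : ENNReal)⁻¹ *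
        ∑ i, ENNReal.ofReal ((markovOperator T ^ n) f (T i x)) := by
  rw [markovOperator_pow_succ_apply, ENNReal.ofReal_div_of_pos (by exact_mod_cast Fintype.card_pos),
    ENNReal.ofReal_sum_of_nonneg fun i _ ↦ markovOperator_pow_nonneg T n hf (T i x),
    ENNReal.ofReal_natCast, ENNReal.div_eq_inv_mul]

lemma measure_cylinder_inter_trajectory_mem_le
    (hs : ∀ (n : ℕ) (c : ℕ → ι),
      P {ω | ∀ i < n, s i ω = c i} = (Fintype.card ι : ENNReal)⁻¹ ^ n)
    (A : Set α) (n m : ℕ) (c : ℕ → ι) (x : α) :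
    P {ω | (∀ i < m, s i ω = c i) ∧ trajectory T (fun i ↦ s (m + i) ω) x n ∈ A} ≤
      (Fintype.card ι : ENNReal)⁻¹ ^ m *
        ENNReal.ofReal ((markovOperator T ^ n) (A.indicator 1) x) := by
  have hA₀ : (0 : α → ℝ) ≤ A.indicator 1 := Set.indicator_nonneg fun _ _ ↦ zero_le_one
  have : Nonempty ι := ⟨c 0⟩
  induction n generalizing m c x with
  | zero => by_cases hx : x ∈ A <;> simp [trajectory, hx, hs]
  | succ n ih =>
    have split_next_letter :
        {ω | (∀ i < m, s i ω = c i) ∧ trajectory T (fun i ↦ s (m + i) ω) x (n + 1) ∈ A} ⊆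
          ⋃ j, {ω | (∀ i < m + 1, s i ω = Function.update c m j i) ∧
            trajectory T (fun i ↦ s (m + 1 + i) ω) (T j x) n ∈ A} := by
      rintro ω ⟨hcyl, hA⟩
      refine Set.mem_iUnion.mpr ⟨s m ω, fun i hi ↦ ?_, ?_⟩
      · rcases Nat.lt_succ_iff_lt_or_eq.mp hi with hi | rfl
        · rw [Function.update_of_ne hi.ne, hcyl i hi]
        · rw [Function.update_self]
      · simpa only [trajectory_succ', add_zero, add_assoc, add_comm 1] using hA
    calc _ ≤ _ := measure_mono split_next_letter
      _ ≤ _ := measure_iUnion_fintype_le _ _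
      _ ≤ ∑ j, (Fintype.card ι : ENNReal)⁻¹ ^ (m + 1) *
            ENNReal.ofReal ((markovOperator T ^ n) (A.indicator 1) (T j x)) :=
          Finset.sum_le_sum fun j _ ↦ ih (m + 1) _ _
      _ = _ := by
          rw [← Finset.mul_sum, ofReal_markovOperator_pow_succ_apply T n hA₀, pow_succ, mul_assoc]

theorem ae_tendsto_trajectory_cofinite [Nonempty ι] [Countable α]
    (hs : ∀ (n : ℕ) (c : ℕ → ι),
      P {ω | ∀ i < n, s i ω = c i} = (Fintype.card ι : ENNReal)⁻¹ ^ n) {x : α}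
    (hsum : ∀ y, Summable fun n ↦ (markovOperator T ^ n) (Set.indicator {y} 1) x) :
    ∀ᵐ ω ∂P, Tendsto (trajectory T (fun i ↦ s i ω) x) atTop cofinite := by
  simp only [Tendsto, le_cofinite_iff_eventually_ne, ae_all_iff]
  intro y
  have hle (n : ℕ) : P {ω | trajectory T (fun i ↦ s i ω) x n = y} ≤
      ENNReal.ofReal ((markovOperator T ^ n) (Set.indicator {y} 1) x) := by
    simpa using
      measure_cylinder_inter_trajectory_mem_le T hs {y} n 0 (fun _ ↦ Classical.arbitrary ι) x
  exact ae_eventually_notMem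
    (ne_top_of_le_ne_top (hsum y).tsum_ofReal_ne_top (ENNReal.tsum_le_tsum hle))

end RandomIteration

section DyadicLevel

/-- The exponent `ν` of `2` in the reduced denominator of a rational, measuring how deep the
rational lies in the Schreier graph. -/
def dyadicLevel (x : ℚ) : ℕ := padicValNat 2 x.den

lemma dyadicLevel_add_intCast (x : ℚ) (m : ℤ) : dyadicLevel (x + m) = dyadicLevel x := by
  rw [dyadicLevel, Rat.add_intCast_den, dyadicLevel]

lemma dyadicLevel_add_one (x : ℚ) : dyadicLevel (x + 1) = dyadicLevel x :=
  mod_cast dyadicLevel_add_intCast x 1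

lemma dyadicLevel_sub_one (x : ℚ) : dyadicLevel (x - 1) = dyadicLevel x := by
  rw [← dyadicLevel_add_one (x - 1), sub_add_cancel]

lemma odd_num_of_dyadicLevel_ne_zero {x : ℚ} (hx : dyadicLevel x ≠ 0) : Odd x.num := by
  have h2 : 2 ∣ x.den := dvd_of_one_le_padicValNat (Nat.one_le_iff_ne_zero.mpr hx)
  rw [← Int.natAbs_odd, ← Nat.coprime_two_right]
  exact x.reduced.coprime_dvd_right h2

lemma den_div_two_of_odd_num {x : ℚ} (hx : Odd x.num) : (x / 2).den = 2 * x.den := by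
  have hcop : x.num.natAbs.Coprime (2 * x.den) :=
    (Nat.coprime_two_right.mpr (Int.natAbs_odd.mpr hx)).mul_right x.reduced
  have hfrac : x / 2 = x.num / ((2 * x.den : ℕ) : ℤ) := by
    push_cast
    rw [mul_comm, ← div_div, Rat.num_div_den]
  rw [hfrac, ← Nat.cast_inj (R := ℤ)]
  exact Rat.den_div_eq_of_coprime (by exact_mod_cast Nat.mul_pos two_pos x.den_pos) hcop

lemma dyadicLevel_div_two_of_odd_num {x : ℚ} (hx : Odd x.num) :
    dyadicLevel (x / 2) = dyadicLevel x + 1 := by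
  rw [dyadicLevel, den_div_two_of_odd_num hx, padicValNat.mul two_ne_zero x.den_ne_zero,
    padicValNat_self, add_comm, dyadicLevel]

lemma dyadicLevel_le_two_mul_add_one (x : ℚ) : dyadicLevel x ≤ dyadicLevel (2 * x) + 1 := by
  have hdvd : x.den ∣ (2 * x).den * 2 := by
    simpa [mul_div_cancel_left₀ x (two_ne_zero' ℚ), ← div_eq_mul_inv] using
      Rat.mul_den_dvd (2 * x) 2⁻¹
  have hmul : padicValNat 2 ((2 * x).den * 2) = dyadicLevel (2 * x) + 1 := by
    rw [padicValNat.mul (2 * x).den_ne_zero two_ne_zero, padicValNat_self, dyadicLevel]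
  rw [← hmul, ← padicValNat_dvd_iff_le (mul_ne_zero (2 * x).den_ne_zero two_ne_zero)]
  exact pow_padicValNat_dvd.trans hdvd

lemma rat_num_add_one (x : ℚ) : (x + 1).num = x.num + x.den := by
  have hden : (x + 1).den = x.den := mod_cast Rat.add_natCast_den x 1
  have h := Rat.add_num_den' x 1
  rw [hden] at h
  simpa [x.den_ne_zero] using h

lemma odd_num_or_odd_num_add_one (x : ℚ) : Odd x.num ∨ Odd (x + 1).num := by
  refine or_iff_not_imp_left.mpr fun hnum ↦ ?_
  rw [Int.not_odd_iff_even] at hnum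
  have hden : Odd x.den := by
    have h2 : 2 ∣ x.num.natAbs := (Int.natAbs_even.mpr hnum).two_dvd
    exact Nat.coprime_two_left.mp (x.reduced.coprime_dvd_left h2)
  rw [rat_num_add_one]
  exact hnum.add_odd (by exact_mod_cast hden)

lemma exists_add_intCast_odd_num (x : ℚ) :
    ∃ m : ℤ, 0 < x + m ∧ x + m ≤ 2 ∧ Odd (x + m).num := by
  have hpos : 0 < x + (1 - ⌈x⌉ : ℤ) := by
    push_cast
    linarith [Int.ceil_lt_add_one x]
  have hle : x + (1 - ⌈x⌉ : ℤ) ≤ 1 := by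
    push_cast
    linarith [Int.le_ceil x]
  rcases odd_num_or_odd_num_add_one (x + (1 - ⌈x⌉ : ℤ)) with hodd | hodd
  · exact ⟨1 - ⌈x⌉, hpos, by linarith, hodd⟩
  · refine ⟨1 - ⌈x⌉ + 1, ?_⟩
    rw [Int.cast_add, Int.cast_one, ← add_assoc]
    exact ⟨by linarith, by linarith, hodd⟩

end DyadicLevel

section Potential

/-- A superharmonic function for the walk, comparable to `(3/4) ^ dyadicLevel x`. The factor `7/8`
to the right of `1` pays for the step `x ↦ 2 * x` on `(0, 1]`, the only one that can lower the
level. -/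
def potential (x : ℚ) : ℝ :=
  (3 / 4) ^ dyadicLevel x * if 1 < x ∧ dyadicLevel x ≠ 0 then 7 / 8 else 1

lemma potential_le_pow (x : ℚ) : potential x ≤ (3 / 4) ^ dyadicLevel x :=
  mul_le_of_le_one_right (by positivity) (by split_ifs <;> norm_num)

lemma mul_pow_le_potential (x : ℚ) : 7 / 8 * (3 / 4) ^ dyadicLevel x ≤ potential x := by
  rw [mul_comm, potential]
  gcongr
  split_ifs <;> norm_num

lemma potential_nonneg : 0 ≤ potential := fun x ↦
  (by positivity : (0 : ℝ) ≤ 7 / 8 * (3 / 4) ^ dyadicLevel x).trans (mul_pow_le_potential x)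

lemma potential_le_one (x : ℚ) : potential x ≤ 1 :=
  (potential_le_pow x).trans (pow_le_one₀ (by norm_num) (by norm_num))

lemma potential_of_dyadicLevel_eq_zero {x : ℚ} (hx : dyadicLevel x = 0) : potential x = 1 := by
  simp [potential, hx]

lemma potential_of_le_one {x : ℚ} (hx : x ≤ 1) : potential x = (3 / 4) ^ dyadicLevel x := by
  simp [potential, hx.not_gt]

lemma potential_of_one_lt {x : ℚ} (hx : 1 < x) (hν : dyadicLevel x ≠ 0) :
    potential x = (3 / 4) ^ dyadicLevel x * (7 / 8) := by
  simp [potential, hx, hν]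

lemma potential_div_two {x : ℚ} (hν : dyadicLevel x ≠ 0) (hx : x ≤ 2) :
    potential (x / 2) = (3 / 4) ^ dyadicLevel x * (3 / 4) := by
  rw [potential_of_le_one (by linarith),
    dyadicLevel_div_two_of_odd_num (odd_num_of_dyadicLevel_ne_zero hν), pow_succ]

lemma potential_two_mul_le (x : ℚ) : potential (2 * x) ≤ (3 / 4) ^ dyadicLevel x * (4 / 3) :=
  calc potential (2 * x) ≤ (3 / 4) ^ dyadicLevel (2 * x) := potential_le_pow _
    _ = (3 / 4) ^ (dyadicLevel (2 * x) + 1) * (4 / 3) := by ring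
    _ ≤ (3 / 4) ^ dyadicLevel x * (4 / 3) := by
        gcongr ?_ * _
        exact pow_le_pow_of_le_one (by norm_num) (by norm_num) (dyadicLevel_le_two_mul_add_one x)

lemma markovOperator_stepQ_apply (f : ℚ → ℝ) (x : ℚ) :
    markovOperator stepQ f x =
      (f (x - 1) + f (x + 1) + f (stepQ 2 x) + f (stepQ 3 x)) / 4 := by
  simp [markovOperator_apply, Fin.sum_univ_four, stepQ]

lemma stepQ_of_nonpos {x : ℚ} (hx : x ≤ 0) : stepQ 2 x = x ∧ stepQ 3 x = x := by
  simp [stepQ, hx]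

lemma stepQ_two_of_pos_of_le_two {x : ℚ} (h₀ : 0 < x) (h₂ : x ≤ 2) : stepQ 2 x = x / 2 := by
  simp [stepQ, h₀.not_ge, h₂]

lemma stepQ_two_of_two_lt {x : ℚ} (hx : 2 < x) : stepQ 2 x = x - 1 := by
  simp [stepQ, (zero_lt_two.trans hx).not_ge, hx.not_ge]

lemma stepQ_three_of_pos_of_le_one {x : ℚ} (h₀ : 0 < x) (h₁ : x ≤ 1) : stepQ 3 x = 2 * x := by
  simp [stepQ, h₀.not_ge, h₁]

lemma stepQ_three_of_one_lt {x : ℚ} (hx : 1 < x) : stepQ 3 x = x + 1 := by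
  simp [stepQ, (zero_lt_one.trans hx).not_ge, hx.not_ge]

lemma markovOperator_potential_le : markovOperator stepQ potential ≤ potential := fun x ↦ by
  rw [markovOperator_stepQ_apply]
  by_cases hν : dyadicLevel x = 0
  · rw [potential_of_dyadicLevel_eq_zero hν]
    linarith [potential_le_one (x - 1), potential_le_one (x + 1), potential_le_one (stepQ 2 x),
      potential_le_one (stepQ 3 x)]
  have hsub := dyadicLevel_sub_one x
  have hadd := dyadicLevel_add_one x
  have hpow : (0 : ℝ) < (3 / 4) ^ dyadicLevel x := by positivity
  rcases le_or_gt x 0 with h₀ | h₀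
  · rw [(stepQ_of_nonpos h₀).1, (stepQ_of_nonpos h₀).2, potential_of_le_one (by linarith),
      potential_of_le_one (by linarith), potential_of_le_one (by linarith), hsub, hadd]
    linarith
  rcases le_or_gt x 1 with h₁ | h₁
  · rw [stepQ_two_of_pos_of_le_two h₀ (by linarith), stepQ_three_of_pos_of_le_one h₀ h₁,
      potential_of_le_one (by linarith), potential_of_one_lt (by linarith) (by rwa [hadd]),
      potential_div_two hν (by linarith), potential_of_le_one h₁, hsub, hadd]
    linarith [potential_two_mul_le x]
  rcases le_or_gt x 2 with h₂ | h₂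
  · rw [stepQ_two_of_pos_of_le_two h₀ h₂, stepQ_three_of_one_lt h₁,
      potential_of_le_one (by linarith), potential_of_one_lt (by linarith) (by rwa [hadd]),
      potential_div_two hν h₂, potential_of_one_lt h₁ hν, hsub, hadd]
    linarith
  · rw [stepQ_two_of_two_lt h₂, stepQ_three_of_one_lt h₁,
      potential_of_one_lt (by linarith) (by rwa [hsub]),
      potential_of_one_lt (by linarith) (by rwa [hadd]), potential_of_one_lt h₁ hν, hsub, hadd]
    linarith

lemma reflTransGen_stepQ_add_intCast (x : ℚ) (m : ℤ) :
    Relation.ReflTransGen (fun a b ↦ ∃ i, stepQ i a = b) x (x + m) := by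
  induction m with
  | zero => simpa using Relation.ReflTransGen.refl
  | succ n ih => exact ih.tail ⟨1, by simp [stepQ, add_assoc]⟩
  | pred n ih => exact ih.tail ⟨0, by simp [stepQ, add_sub_assoc]⟩

lemma exists_reflTransGen_stepQ_potential_lt (x : ℚ) :
    ∃ z, Relation.ReflTransGen (fun a b ↦ ∃ i, stepQ i a = b) x z ∧ potential z < potential x := by
  obtain ⟨m, hpos, hle, hodd⟩ := exists_add_intCast_odd_num x
  refine ⟨(x + m) / 2, (reflTransGen_stepQ_add_intCast x m).tail
    ⟨2, stepQ_two_of_pos_of_le_two hpos hle⟩, ?_⟩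
  calc potential ((x + m) / 2) ≤ (3 / 4) ^ dyadicLevel ((x + m) / 2) := potential_le_pow _
    _ = 3 / 4 * (3 / 4) ^ dyadicLevel x := by
        rw [dyadicLevel_div_two_of_odd_num hodd, dyadicLevel_add_intCast, pow_succ']
    _ < 7 / 8 * (3 / 4) ^ dyadicLevel x := by
        gcongr ?_ * _
        norm_num
    _ ≤ potential x := mul_pow_le_potential x

end Potential

lemma walkQ_eq_trajectory (s : ℕ → Fin 4) (x : ℚ) : walkQ s x = trajectory stepQ s x := by
  ext n
  induction n with
  | zero => rfl
  | succ n ih => rw [walkQ, trajectory, ih]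

theorem simple_random_walk_transient_general
    {Ω : Type*} [MeasurableSpace Ω] (P : Measure Ω) (s : ℕ → Ω → Fin 4)
    (hiid : ∀ (n : ℕ) (c : ℕ → Fin 4),
      P {ω | ∀ i < n, s i ω = c i} = (4 : ENNReal)⁻¹ ^ n)
    (γ₀ : ℚ) :
    ∀ᵐ ω ∂P, ∀ S : Set ℚ, S.Finite →
      {n : ℕ | walkQ (fun i => s i ω) γ₀ n ∈ S}.Finite := by
  have green_summable (y : ℚ) :
      Summable fun n ↦ (markovOperator stepQ ^ n) (Set.indicator {y} 1) γ₀ := by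
    obtain ⟨z, hyz, hlt⟩ := exists_reflTransGen_stepQ_potential_lt y
    exact summable_markovOperator_pow_of_superharmonic potential_nonneg
      markovOperator_potential_le hyz hlt γ₀
  filter_upwards [ae_tendsto_trajectory_cofinite stepQ (by simpa using hiid) green_summable]
    with ω hω S hS
  rw [walkQ_eq_trajectory]
  simpa [← Nat.cofinite_eq_atTop, Set.preimage, Set.compl_def] using hω hS.compl_mem_cofinite

/-- The simple random walk on the Schreier graph `Γ ≅ ℤ[1/2]` is transient: for every starting
point `γ₀ ∈ ℤ[1/2]`, almost surely every finite subset `S ⊆ ℤ[1/2]` is visited only finitely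
often.  The probability space is any space carrying an i.i.d. sequence `s` of uniformly
distributed choices in `{1,2,3,4}` (i.e. the uniform product measure on `{1,2,3,4}^ℕ`). -/
theorem simple_random_walk_transient
    {Ω : Type*} [MeasurableSpace Ω] (P : Measure Ω) [IsProbabilityMeasure P]
    (s : ℕ → Ω → Fin 4)
    (hmeas : ∀ n i, MeasurableSet {ω | s n ω = i})
    (hiid : ∀ (n : ℕ) (c : ℕ → Fin 4),
      P {ω | ∀ i < n, s i ω = c i} = (4 : ENNReal)⁻¹ ^ n)
    (γ₀ : ℚ) (hγ₀ : γ₀ ∈ DyadicQ) :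
    ∀ᵐ ω ∂P, ∀ S : Set ℚ, S.Finite →
      {n : ℕ | walkQ (fun i => s i ω) γ₀ n ∈ S}.Finite := by
  exact simple_random_walk_transient_general P s hiid γ₀
end
end

section
/- Comparison criterion for transience: let X be a countable set and p, p′ : X × X → [0,1] two Markov transition kernels (∑_y p(x,y) = 1 and ∑_y p′(x,y) = 1 for every x ∈ X). Assume (i) there is a function m : X → (0,∞) that is stationary for both kernels, i.e. ∑_x m(x)p(x,y) = m(y) and ∑_x m(x)p′(x,y) = m(y) for all y; (ii) p is reversible with respect to m, i.e. m(x)p(x,y) = m(y)p(y,x) for all x, y; (iii) there is ε > 0 with p′(x,y) ≥ ε·p(x,y) for all x, y. Define the n-step kernels by p^{(0)}(x,y) = 1 if x = y and 0 otherwise, and p^{(n+1)}(x,y) = ∑_z p(x,z)p^{(n)}(z,y), and similarly for p′. Then for every o ∈ X one has ∑_{n=0}^∞ p′^{(n)}(o,o) ≤ (1/ε)·∑_{n=0}^∞ p^{(n)}(o,o) (as elements of [0,∞]); in particular, if ∑_{n=0}^∞ p^{(n)}(o,o) < ∞ (p is transient) then ∑_{n=0}^∞ p′^{(n)}(o,o)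 < ∞ (p′ is transient). -/
open scoped ENNReal

noncomputable section

open Classical in
/-- The `n`-step transition kernel of a Markov kernel `p` on a countable state space:
`iterKernel p 0 = identity kernel`, `iterKernel p (n+1) x y = ∑ z, p x z * iterKernel p n z y`. -/
def iterKernel {X : Type*} (p : X → X → ℝ≥0∞) : ℕ → X → X → ℝ≥0∞
  | 0 => fun x y => if x = y then 1 else 0
  | n + 1 => fun x y => ∑' z, p x z * iterKernel p n z y

/-!
Fix `0 < r < 1` and let `f = ∑ rⁿ p'ⁿ(·, o)` and `g = ∑ rⁿ pⁿ(·, o)`, which are square summable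
against `m`. Write `E` and `E'` for the quadratic forms `⟨h, (1 - rP)h⟩` and `⟨h, (1 - rP')h⟩` on
`ℓ²(m)`; then `ε E ≤ E'` because `p' - ε p` is nonnegative with total mass at most `1 - ε`. Moreover
`(1 - rP)g = δ_o = (1 - rP')f`, so that `E(f, g) = m(o) f(o) = E'(f, f)` and
`E(g, g) = m(o) g(o)`. Reversibility makes `E` symmetric, so positivity of `E(εf - g, εf - g)` gives
`2 ε m(o) f(o) ≤ ε² E(f, f) + E(g, g) ≤ ε m(o) f(o) + m(o) g(o)`,
that is `ε f(o) ≤ g(o)`. Finally let `r` tend to `1`. Since subtraction truncates in `[0, ∞]`,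
each inequality carries its negative terms on the opposite side.
-/

section

open Filter Topology

lemma mul_add_mul_le_mul_add_mul_of_canonicallyOrdered {R : Type*} [CommSemiring R]
    [PartialOrder R] [CanonicallyOrderedAdd R] {a b c d : R} (hab : a ≤ b) (hcd : c ≤ d) :
    b * c + a * d ≤ b * d + a * c := by
  obtain ⟨u, rfl⟩ := exists_add_of_le hab
  obtain ⟨v, rfl⟩ := exists_add_of_le hcd
  calc (a + u) * c + a * (c + v) ≤ (a + u) * c + a * (c + v) + u * v := le_self_add
    _ = (a + u) * (c + v) + a * c := by ring

lemma two_mul_mul_le_mul_self_add_mul_self {R : Type*} [CommSemiring R] [LinearOrder R]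
    [CanonicallyOrderedAdd R] (a b : R) : 2 * (a * b) ≤ a * a + b * b := by
  wlog hab : a ≤ b generalizing a b
  · simpa only [mul_comm b a, add_comm (b * b)] using this b a (le_of_not_ge hab)
  calc 2 * (a * b) = b * a + a * b := by ring
    _ ≤ b * b + a * a := mul_add_mul_le_mul_add_mul_of_canonicallyOrdered hab hab
    _ = a * a + b * b := add_comm _ _

-- Turns a bound for `P` into one for `rP`: `1 - rP` is a convex combination of `1 - P` and `1`.
lemma mul_add_le_add_mul_of_le_one {r a b c d : ℝ≥0∞} (hr : r ≤ 1) (hbc : b ≤ c)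
    (h : a + b ≤ c + d) : r * a + b ≤ c + r * d := by
  have hsplit (x : ℝ≥0∞) : r * x + (1 - r) * x = x := by
    rw [← add_mul, add_tsub_cancel_of_le hr, one_mul]
  calc r * a + b = r * (a + b) + (1 - r) * b := by rw [mul_add, add_assoc, hsplit]
    _ ≤ r * (c + d) + (1 - r) * c := by gcongr
    _ = c + r * d := by rw [mul_add, add_right_comm, hsplit]

lemma tsum_le_of_forall_tsum_pow_mul_le {a : ℕ → ℝ≥0∞} {C : ℝ≥0∞}
    (h : ∀ r < 1, ∑' n, r ^ n * a n ≤ C) : ∑' n, a n ≤ C := by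
  refine ENNReal.tsum_le_of_sum_range_le fun N ↦ ?_
  have hpow (n : ℕ) : Tendsto (fun r : ℝ≥0∞ ↦ r ^ n * a n) (𝓝[<] 1) (𝓝 (a n)) := by
    have hr : Tendsto (fun r : ℝ≥0∞ ↦ r ^ n) (𝓝[<] 1) (𝓝 1) := by
      simpa only [one_pow] using
        ((ENNReal.continuous_pow n).tendsto 1).mono_left nhdsWithin_le_nhds
    simpa only [one_mul] using ENNReal.Tendsto.mul_const hr (.inl one_ne_zero)
  have : (𝓝[<] (1 : ℝ≥0∞)).NeBot := ENNReal.nhdsLT_neBot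
  refine le_of_tendsto (tendsto_finsetSum (Finset.range N) fun n _ ↦ hpow n) ?_
  filter_upwards [self_mem_nhdsWithin] with r hr
  exact (ENNReal.sum_le_tsum _).trans (h r hr)

variable {X : Type*}

lemma le_one_of_mul_le_of_tsum_le {f g : X → ℝ≥0∞} {ε : ℝ≥0∞} (hf : ∑' x, f x = 1)
    (hg : ∑' x, g x ≤ 1) (hle : ∀ x, ε * f x ≤ g x) : ε ≤ 1 :=
  calc ε = ∑' x, ε * f x := by rw [ENNReal.tsum_mul_left, hf, mul_one]
    _ ≤ ∑' x, g x := ENNReal.tsum_le_tsum hle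
    _ ≤ 1 := hg

/-- The inner product `⟨f, g⟩` of `ℓ²(m)`, with values in `[0, ∞]`. -/
def weightedInner (m f g : X → ℝ≥0∞) : ℝ≥0∞ :=
  ∑' x, m x * (f x * g x)

/-- The bilinear form `⟨f, Pg⟩` on `ℓ²(m)` of the operator `Pg(x) = ∑ y, p x y * g y`, written as a
double sum so that the two arguments play symmetric roles. -/
def kernelForm (m : X → ℝ≥0∞) (p : X → X → ℝ≥0∞) (f g : X → ℝ≥0∞) : ℝ≥0∞ :=
  ∑' x, ∑' y, m x * p x y * (f x * g y)

/-- The Green function `x ↦ ∑ rⁿ pⁿ(x, o)` with pole `o` and discount factor `r`. For `r < 1` it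
lies in `ℓ²(m)` whether or not `p` is transient. -/
def discountedGreen (p : X → X → ℝ≥0∞) (r : ℝ≥0∞) (o x : X) : ℝ≥0∞ :=
  ∑' n, r ^ n * iterKernel p n x o

variable {m : X → ℝ≥0∞} {p p' : X → X → ℝ≥0∞} {ε r : ℝ≥0∞} {o : X}

lemma two_mul_weightedInner_le (t : ℝ≥0∞) (f g : X → ℝ≥0∞) :
    2 * (t * weightedInner m f g) ≤ t ^ 2 * weightedInner m f f + weightedInner m g g := by
  simp only [weightedInner, ← ENNReal.tsum_mul_left, ← ENNReal.tsum_add]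
  refine ENNReal.tsum_le_tsum fun x ↦ ?_
  calc 2 * (t * (m x * (f x * g x))) = m x * (2 * (t * f x * g x)) := by ring
    _ ≤ m x * (t * f x * (t * f x) + g x * g x) := by
      gcongr; exact two_mul_mul_le_mul_self_add_mul_self _ _
    _ = t ^ 2 * (m x * (f x * f x)) + m x * (g x * g x) := by ring

lemma weightedInner_ne_top {f g : X → ℝ≥0∞} (hf : weightedInner m f f ≠ ⊤)
    (hg : weightedInner m g g ≠ ⊤) : weightedInner m f g ≠ ⊤ := by
  refine ne_top_of_le_ne_top (ENNReal.add_ne_top.2 ⟨hf, hg⟩) ?_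
  calc weightedInner m f g ≤ 2 * weightedInner m f g := le_mul_of_one_le_left' one_le_two
    _ ≤ weightedInner m f f + weightedInner m g g := by
      simpa only [one_mul, one_pow] using two_mul_weightedInner_le 1 f g

lemma two_mul_kernelForm (f g : X → ℝ≥0∞) :
    2 * kernelForm m p f g = ∑' x, ∑' y, m x * p x y * (2 * (f x * g y)) := by
  simp only [kernelForm, ← ENNReal.tsum_mul_left, mul_left_comm (2 : ℝ≥0∞)]

lemma kernelForm_comm (hrev : ∀ x y, m x * p x y = m y * p y x) (f g : X → ℝ≥0∞) :
    kernelForm m p f g = kernelForm m p g f := by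
  rw [kernelForm, ENNReal.tsum_comm]
  refine tsum_congr fun y ↦ tsum_congr fun x ↦ ?_
  rw [hrev, mul_comm (f x)]

lemma tsum_mul_eq_of_reversible (hrow : ∀ x, ∑' y, p x y = 1)
    (hrev : ∀ x y, m x * p x y = m y * p y x) (y : X) : ∑' x, m x * p x y = m y := by
  simp only [hrev _ y, ENNReal.tsum_mul_left, hrow, mul_one]

lemma tsum_tsum_kernel_mul_add (F : X → ℝ≥0∞) :
    ∑' x, ∑' y, m x * p x y * (F x + F y) =
      ∑' x, m x * F x * ∑' y, p x y + ∑' y, (∑' x, m x * p x y) * F y := by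
  simp only [mul_add, ENNReal.tsum_add]
  congr 1
  · simp only [mul_right_comm _ _ (F _), ENNReal.tsum_mul_left]
  · rw [ENNReal.tsum_comm]
    simp only [ENNReal.tsum_mul_right]

lemma tsum_tsum_kernel_mul_add_eq (hrow : ∀ x, ∑' y, p x y = 1)
    (hcol : ∀ y, ∑' x, m x * p x y = m y) (F : X → ℝ≥0∞) :
    ∑' x, ∑' y, m x * p x y * (F x + F y) = 2 * ∑' x, m x * F x := by
  simp only [tsum_tsum_kernel_mul_add, hrow, hcol, mul_one, two_mul]

lemma tsum_tsum_kernel_mul_add_le (hrow : ∀ x, ∑' y, p x y ≤ 1)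
    (hcol : ∀ y, ∑' x, m x * p x y ≤ m y) (F : X → ℝ≥0∞) :
    ∑' x, ∑' y, m x * p x y * (F x + F y) ≤ 2 * ∑' x, m x * F x := by
  rw [tsum_tsum_kernel_mul_add, two_mul]
  exact add_le_add (ENNReal.tsum_le_tsum fun x ↦ mul_le_of_le_one_right zero_le (hrow x))
    (ENNReal.tsum_le_tsum fun y ↦ mul_le_mul_left (hcol y) (F y))

lemma kernelForm_self_le (hrow : ∀ x, ∑' y, p x y ≤ 1) (hcol : ∀ y, ∑' x, m x * p x y ≤ m y)
    (f : X → ℝ≥0∞) : kernelForm m p f f ≤ weightedInner m f f := by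
  refine (ENNReal.mul_le_mul_iff_right two_ne_zero ENNReal.ofNat_ne_top).1 ?_
  calc 2 * kernelForm m p f f = ∑' x, ∑' y, m x * p x y * (2 * (f x * f y)) :=
        two_mul_kernelForm f f
    _ ≤ ∑' x, ∑' y, m x * p x y * (f x * f x + f y * f y) := by
      gcongr; exact two_mul_mul_le_mul_self_add_mul_self _ _
    _ ≤ 2 * weightedInner m f f := tsum_tsum_kernel_mul_add_le hrow hcol fun x ↦ f x * f x

lemma kernelForm_add_mul_weightedInner_le (hrow : ∀ x, ∑' y, p x y = 1)
    (hcol : ∀ y, ∑' x, m x * p x y = m y) (hrow' : ∀ x, ∑' y, p' x y ≤ 1)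
    (hcol' : ∀ y, ∑' x, m x * p' x y ≤ m y) (hle : ∀ x y, ε * p x y ≤ p' x y) (f : X → ℝ≥0∞) :
    kernelForm m p' f f + ε * weightedInner m f f ≤
      weightedInner m f f + ε * kernelForm m p f f := by
  have hpointwise (x y : X) :
      m x * p' x y * (2 * (f x * f y)) + m x * (ε * p x y) * (f x * f x + f y * f y) ≤
        m x * p' x y * (f x * f x + f y * f y) + m x * (ε * p x y) * (2 * (f x * f y)) :=
    mul_add_mul_le_mul_add_mul_of_canonicallyOrdered (mul_le_mul_right (hle x y) (m x))
      (two_mul_mul_le_mul_self_add_mul_self (f x) (f y))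
  have hsum := ENNReal.tsum_le_tsum fun x ↦ ENNReal.tsum_le_tsum (hpointwise x)
  simp only [ENNReal.tsum_add, mul_left_comm (m _) ε, mul_assoc ε, ENNReal.tsum_mul_left,
    ← two_mul_kernelForm] at hsum
  rw [tsum_tsum_kernel_mul_add_eq hrow hcol fun x ↦ f x * f x] at hsum
  refine (ENNReal.mul_le_mul_iff_right two_ne_zero ENNReal.ofNat_ne_top).1 ?_
  calc 2 * (kernelForm m p' f f + ε * weightedInner m f f)
      = 2 * kernelForm m p' f f + ε * (2 * weightedInner m f f) := by ring
    _ ≤ _ := hsum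
    _ ≤ 2 * weightedInner m f f + ε * (2 * kernelForm m p f f) := by
      gcongr; exact tsum_tsum_kernel_mul_add_le hrow' hcol' fun x ↦ f x * f x
    _ = 2 * (weightedInner m f f + ε * kernelForm m p f f) := by ring

-- Positivity of `⟨h, (1 - P)h⟩` at `h = tf - g`. It comes from `(h x - h y)² ≥ 0`, where
-- `h x - h y` is the difference of the nonnegative `t * f x + g y` and `t * f y + g x`.
lemma kernelForm_add_two_mul_weightedInner_le (hrow : ∀ x, ∑' y, p x y = 1)
    (hrev : ∀ x y, m x * p x y = m y * p y x) (t : ℝ≥0∞) (f g : X → ℝ≥0∞) :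
    t ^ 2 * kernelForm m p f f + kernelForm m p g g + 2 * (t * weightedInner m f g) ≤
      t ^ 2 * weightedInner m f f + weightedInner m g g + 2 * (t * kernelForm m p f g) := by
  have hcol := tsum_mul_eq_of_reversible hrow hrev
  have hpointwise (x y : X) := mul_le_mul_right
    (two_mul_mul_le_mul_self_add_mul_self (t * f x + g y) (t * f y + g x)) (m x * p x y)
  have hsum := ENNReal.tsum_le_tsum fun x ↦ ENNReal.tsum_le_tsum (hpointwise x)
  have hleft : ∑' x, ∑' y, m x * p x y * (2 * ((t * f x + g y) * (t * f y + g x))) =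
      2 * (t ^ 2 * kernelForm m p f f + kernelForm m p g g + 2 * (t * weightedInner m f g)) := by
    have hexpand (x y : X) : m x * p x y * (2 * ((t * f x + g y) * (t * f y + g x))) =
        2 * (t ^ 2 * (m x * p x y * (f x * f y)) + m x * p x y * (g x * g y) +
          t * (m x * p x y * (f x * g x + f y * g y))) := by ring
    simp only [hexpand, ENNReal.tsum_mul_left, ENNReal.tsum_add,
      tsum_tsum_kernel_mul_add_eq hrow hcol fun x ↦ f x * g x, kernelForm, weightedInner]
    ring
  have hcomm : ∑' x, ∑' y, m x * p x y * (g x * f y) = ∑' x, ∑' y, m x * p x y * (f x * g y) :=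
    kernelForm_comm hrev g f
  have hright : ∑' x, ∑' y, m x * p x y * ((t * f x + g y) * (t * f x + g y) +
        (t * f y + g x) * (t * f y + g x)) =
      2 * (t ^ 2 * weightedInner m f f + weightedInner m g g + 2 * (t * kernelForm m p f g)) := by
    have hexpand (x y : X) : m x * p x y * ((t * f x + g y) * (t * f x + g y) +
          (t * f y + g x) * (t * f y + g x)) =
        t ^ 2 * (m x * p x y * (f x * f x + f y * f y)) + m x * p x y * (g x * g x + g y * g y) +
          2 * (t * (m x * p x y * (f x * g y) + m x * p x y * (g x * f y))) := by ring
    simp only [hexpand, ENNReal.tsum_mul_left, ENNReal.tsum_add,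
      tsum_tsum_kernel_mul_add_eq hrow hcol fun x ↦ f x * f x,
      tsum_tsum_kernel_mul_add_eq hrow hcol fun x ↦ g x * g x, hcomm, kernelForm, weightedInner]
    ring
  rw [hleft, hright] at hsum
  exact (ENNReal.mul_le_mul_iff_right two_ne_zero ENNReal.ofNat_ne_top).1 hsum

lemma mul_kernelForm_add_two_mul_weightedInner_le (hrow : ∀ x, ∑' y, p x y = 1)
    (hrev : ∀ x y, m x * p x y = m y * p y x) (hr : r ≤ 1) (t : ℝ≥0∞) (f g : X → ℝ≥0∞) :
    r * (t ^ 2 * kernelForm m p f f + kernelForm m p g g) + 2 * (t * weightedInner m f g) ≤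
      t ^ 2 * weightedInner m f f + weightedInner m g g + r * (2 * (t * kernelForm m p f g)) :=
  mul_add_le_add_mul_of_le_one hr (two_mul_weightedInner_le t f g)
    (kernelForm_add_two_mul_weightedInner_le hrow hrev t f g)

lemma iterKernel_le_one (hrow : ∀ x, ∑' y, p x y ≤ 1) (n : ℕ) (x y : X) :
    iterKernel p n x y ≤ 1 := by
  induction n generalizing x with
  | zero => simp only [iterKernel]; split_ifs <;> simp only [le_refl, zero_le]
  | succ n ih =>
    calc iterKernel p (n + 1) x y ≤ ∑' z, p x z :=
          ENNReal.tsum_le_tsum fun z ↦ mul_le_of_le_one_right zero_le (ih z)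
      _ ≤ 1 := hrow x

lemma tsum_mul_iterKernel_zero (F : X → ℝ≥0∞) (o : X) : ∑' x, F x * iterKernel p 0 x o = F o := by
  simp only [iterKernel, mul_ite, mul_one, mul_zero, tsum_ite_eq]

lemma tsum_mul_iterKernel_le (hcol : ∀ y, ∑' x, m x * p x y ≤ m y) (n : ℕ) (o : X) :
    ∑' x, m x * iterKernel p n x o ≤ m o := by
  induction n with
  | zero => exact (tsum_mul_iterKernel_zero m o).le
  | succ n ih =>
    calc ∑' x, m x * iterKernel p (n + 1) x o
        = ∑' z, (∑' x, m x * p x z) * iterKernel p n z o := by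
          simp only [iterKernel, ← ENNReal.tsum_mul_left, ← ENNReal.tsum_mul_right, ← mul_assoc]
          exact ENNReal.tsum_comm
      _ ≤ ∑' z, m z * iterKernel p n z o := by gcongr; exact hcol _
      _ ≤ m o := ih

lemma discountedGreen_le (hrow : ∀ x, ∑' y, p x y ≤ 1) (x : X) :
    discountedGreen p r o x ≤ (1 - r)⁻¹ := by
  rw [← ENNReal.tsum_geometric]
  exact ENNReal.tsum_le_tsum fun n ↦
    mul_le_of_le_one_right zero_le (iterKernel_le_one hrow n x o)

lemma tsum_mul_discountedGreen_le (hcol : ∀ y, ∑' x, m x * p x y ≤ m y) :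
    ∑' x, m x * discountedGreen p r o x ≤ (1 - r)⁻¹ * m o := by
  simp only [discountedGreen, ← ENNReal.tsum_mul_left, mul_left_comm (m _)]
  rw [ENNReal.tsum_comm, ← ENNReal.tsum_geometric, ← ENNReal.tsum_mul_right]
  gcongr with n
  rw [ENNReal.tsum_mul_left]
  gcongr
  exact tsum_mul_iterKernel_le hcol n o

lemma weightedInner_discountedGreen_ne_top (hrow : ∀ x, ∑' y, p x y ≤ 1)
    (hcol : ∀ y, ∑' x, m x * p x y ≤ m y) (hmo : m o ≠ ⊤) (hr : r < 1) :
    weightedInner m (discountedGreen p r o) (discountedGreen p r o) ≠ ⊤ := by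
  have hinv : (1 - r)⁻¹ ≠ ⊤ := ENNReal.inv_ne_top.2 (tsub_pos_of_lt hr).ne'
  refine ne_top_of_le_ne_top (ENNReal.mul_ne_top hinv (ENNReal.mul_ne_top hinv hmo)) ?_
  calc weightedInner m (discountedGreen p r o) (discountedGreen p r o)
      ≤ ∑' x, m x * ((1 - r)⁻¹ * discountedGreen p r o x) := by
        unfold weightedInner; gcongr; exact discountedGreen_le hrow _
    _ = (1 - r)⁻¹ * ∑' x, m x * discountedGreen p r o x := by
      simp only [mul_left_comm (m _), ENNReal.tsum_mul_left]
    _ ≤ (1 - r)⁻¹ * ((1 - r)⁻¹ * m o) := by gcongr; exact tsum_mul_discountedGreen_le hcol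

lemma discountedGreen_eq (p : X → X → ℝ≥0∞) (r : ℝ≥0∞) (o x : X) :
    discountedGreen p r o x = iterKernel p 0 x o + r * ∑' y, p x y * discountedGreen p r o y := by
  rw [discountedGreen, tsum_eq_zero_add' ENNReal.summable, pow_zero, one_mul]
  congr 1
  calc ∑' n, r ^ (n + 1) * iterKernel p (n + 1) x o
      = r * ∑' n, ∑' y, p x y * (r ^ n * iterKernel p n y o) := by
        simp only [iterKernel, pow_succ', mul_assoc, mul_left_comm (p x _), ENNReal.tsum_mul_left]
    _ = r * ∑' y, p x y * discountedGreen p r o y := by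
      rw [ENNReal.tsum_comm]
      simp only [ENNReal.tsum_mul_left, discountedGreen]

lemma weightedInner_discountedGreen (p : X → X → ℝ≥0∞) (r : ℝ≥0∞) (o : X) (f : X → ℝ≥0∞) :
    weightedInner m f (discountedGreen p r o) =
      r * kernelForm m p f (discountedGreen p r o) + m o * f o := by
  have hexpand (x : X) : m x * (f x * discountedGreen p r o x) =
      r * ∑' y, m x * p x y * (f x * discountedGreen p r o y) +
        m x * f x * iterKernel p 0 x o := by
    have hpull : ∑' y, m x * p x y * (f x * discountedGreen p r o y) =
        m x * f x * ∑' y, p x y * discountedGreen p r o y := by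
      rw [← ENNReal.tsum_mul_left]
      exact tsum_congr fun y ↦ mul_mul_mul_comm _ _ _ _
    rw [hpull, discountedGreen_eq]
    ring
  simp only [weightedInner, hexpand, ENNReal.tsum_add, ENNReal.tsum_mul_left, kernelForm,
    tsum_mul_iterKernel_zero fun x ↦ m x * f x]

lemma mul_weightedInner_discountedGreen_le (hrow : ∀ x, ∑' y, p x y = 1)
    (hcol : ∀ y, ∑' x, m x * p x y = m y) (hrow' : ∀ x, ∑' y, p' x y ≤ 1)
    (hcol' : ∀ y, ∑' x, m x * p' x y ≤ m y) (hle : ∀ x y, ε * p x y ≤ p' x y) (hmo : m o ≠ ⊤)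
    (hr : r < 1) :
    ε * weightedInner m (discountedGreen p' r o) (discountedGreen p' r o) ≤
      m o * discountedGreen p' r o o +
        r * (ε * kernelForm m p (discountedGreen p' r o) (discountedGreen p' r o)) := by
  set f := discountedGreen p' r o
  have hff : weightedInner m f f = r * kernelForm m p' f f + m o * f o :=
    weightedInner_discountedGreen p' r o f
  have hfin : r * kernelForm m p' f f ≠ ⊤ :=
    ne_top_of_le_ne_top (weightedInner_discountedGreen_ne_top hrow' hcol' hmo hr)
      (hff ▸ le_self_add)
  have hcompare : r * kernelForm m p' f f + ε * weightedInner m f f ≤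
      weightedInner m f f + r * (ε * kernelForm m p f f) :=
    mul_add_le_add_mul_of_le_one hr.le
      (mul_le_of_le_one_left zero_le (le_one_of_mul_le_of_tsum_le (hrow o) (hrow' o) (hle o)))
      (kernelForm_add_mul_weightedInner_le hrow hcol hrow' hcol' hle f)
  refine (ENNReal.add_le_add_iff_left hfin).1 ?_
  calc _ ≤ weightedInner m f f + r * (ε * kernelForm m p f f) := hcompare
    _ = _ := by rw [hff, add_assoc]

lemma mul_discountedGreen_self_le (hrow : ∀ x, ∑' y, p x y = 1)
    (hrev : ∀ x y, m x * p x y = m y * p y x) (hrow' : ∀ x, ∑' y, p' x y ≤ 1)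
    (hcol' : ∀ y, ∑' x, m x * p' x y ≤ m y) (hle : ∀ x y, ε * p x y ≤ p' x y) (hmo₀ : m o ≠ 0)
    (hmo : m o ≠ ⊤) (hr : r < 1) :
    ε * discountedGreen p' r o o ≤ discountedGreen p r o o := by
  have hcol := tsum_mul_eq_of_reversible hrow hrev
  have hε : ε ≠ ⊤ :=
    ne_top_of_le_ne_top ENNReal.one_ne_top (le_one_of_mul_le_of_tsum_le (hrow o) (hrow' o) (hle o))
  set f := discountedGreen p' r o
  set g := discountedGreen p r o
  have hff_fin : weightedInner m f f ≠ ⊤ :=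
    weightedInner_discountedGreen_ne_top hrow' hcol' hmo hr
  have hgg_fin : weightedInner m g g ≠ ⊤ :=
    weightedInner_discountedGreen_ne_top (fun x ↦ (hrow x).le) (fun y ↦ (hcol y).le) hmo hr
  have hfg : weightedInner m f g = r * kernelForm m p f g + m o * f o :=
    weightedInner_discountedGreen p r o f
  have hgg : weightedInner m g g = r * kernelForm m p g g + m o * g o :=
    weightedInner_discountedGreen p r o g
  set S := r * (ε ^ 2 * kernelForm m p f f) + r * kernelForm m p g g +
    2 * (ε * weightedInner m f g) with hS
  have hS_fin : S ≠ ⊤ := by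
    have hDff : kernelForm m p f f ≠ ⊤ := ne_top_of_le_ne_top hff_fin
      (kernelForm_self_le (fun x ↦ (hrow x).le) (fun y ↦ (hcol y).le) f)
    have hDgg : r * kernelForm m p g g ≠ ⊤ := ne_top_of_le_ne_top hgg_fin (hgg ▸ le_self_add)
    have hBfg : weightedInner m f g ≠ ⊤ := weightedInner_ne_top hff_fin hgg_fin
    finiteness
  have hsum : S + m o * (ε * f o) ≤ S + m o * g o :=
    calc S + m o * (ε * f o)
        = r * (ε ^ 2 * kernelForm m p f f + kernelForm m p g g) + 2 * (ε * weightedInner m f g) +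
            ε * (m o * f o) := by ring
      _ ≤ ε ^ 2 * weightedInner m f f + weightedInner m g g + r * (2 * (ε * kernelForm m p f g)) +
            ε * (m o * f o) := by
        gcongr ?_ + _
        exact mul_kernelForm_add_two_mul_weightedInner_le hrow hrev hr.le ε f g
      _ = ε * (ε * weightedInner m f f) + weightedInner m g g +
            r * (2 * (ε * kernelForm m p f g)) + ε * (m o * f o) := by ring
      _ ≤ ε * (m o * f o + r * (ε * kernelForm m p f f)) + weightedInner m g g +
            r * (2 * (ε * kernelForm m p f g)) + ε * (m o * f o) := by
        gcongr
        exact mul_weightedInner_discountedGreen_le hrow hcol hrow' hcol' hle hmo hr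
      _ = S + m o * g o := by rw [hS, hfg, hgg]; ring
  exact (ENNReal.mul_le_mul_iff_right hmo₀ hmo).1 ((ENNReal.add_le_add_iff_left hS_fin).1 hsum)

theorem transience_comparison_general (hrow : ∀ x, ∑' y, p x y = 1)
    (hrev : ∀ x y, m x * p x y = m y * p y x) (hrow' : ∀ x, ∑' y, p' x y ≤ 1)
    (hcol' : ∀ y, ∑' x, m x * p' x y ≤ m y) (hle : ∀ x y, ε * p x y ≤ p' x y) (hmo₀ : m o ≠ 0)
    (hmo : m o ≠ ⊤) :
    ε * ∑' n, iterKernel p' n o o ≤ ∑' n, iterKernel p n o o := by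
  rw [← ENNReal.tsum_mul_left]
  refine tsum_le_of_forall_tsum_pow_mul_le fun r hr ↦ ?_
  calc ∑' n, r ^ n * (ε * iterKernel p' n o o) = ε * discountedGreen p' r o o := by
        simp only [mul_left_comm _ ε, ENNReal.tsum_mul_left, discountedGreen]
    _ ≤ discountedGreen p r o o :=
      mul_discountedGreen_self_le hrow hrev hrow' hcol' hle hmo₀ hmo hr
    _ ≤ ∑' n, iterKernel p n o o := ENNReal.tsum_le_tsum fun n ↦
      mul_le_of_le_one_left zero_le (pow_le_one' hr.le n)

end

/-- Comparison criterion for transience (Theorem `thm:r`): if `p` and `p'` are Markov kernels on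
a countable state space with a common stationary measure `m` taking values in `(0,∞)`, `p` is
reversible with respect to `m`, and `p' ≥ ε·p` for some `ε > 0`, then the Green kernel of `p'`
at any point `o` is at most `ε⁻¹` times that of `p`; in particular transience of `p` implies
transience of `p'`. -/
theorem transience_comparison {X : Type*} [Countable X]
    (p p' : X → X → ℝ≥0∞)
    (hp_le : ∀ x y, p x y ≤ 1) (hp'_le : ∀ x y, p' x y ≤ 1)
    (hp_row : ∀ x, ∑' y, p x y = 1) (hp'_row : ∀ x, ∑' y, p' x y = 1)
    (m : X → ℝ≥0∞) (hm_pos : ∀ x, 0 < m x) (hm_fin : ∀ x, m x < ⊤)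
    (hstat : ∀ y, ∑' x, m x * p x y = m y)
    (hstat' : ∀ y, ∑' x, m x * p' x y = m y)
    (hrev : ∀ x y, m x * p x y = m y * p y x)
    (ε : ℝ≥0∞) (hε : 0 < ε) (hε_fin : ε ≠ ⊤)
    (hcomp : ∀ x y, ε * p x y ≤ p' x y)
    (o : X) :
    (∑' n : ℕ, iterKernel p' n o o) ≤ ε⁻¹ * ∑' n : ℕ, iterKernel p n o o ∧
    ((∑' n : ℕ, iterKernel p n o o) < ⊤ → (∑' n : ℕ, iterKernel p' n o o) < ⊤) := by
  have hle : ∑' n, iterKernel p' n o o ≤ ε⁻¹ * ∑' n, iterKernel p n o o :=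
    (ENNReal.mul_le_iff_le_inv hε.ne' hε_fin).1 <| transience_comparison_general hp_row hrev
      (fun x ↦ (hp'_row x).le) (fun y ↦ (hstat' y).le) hcomp (hm_pos o).ne' (hm_fin o).ne
  exact ⟨hle, fun h ↦ hle.trans_lt (ENNReal.mul_lt_top (ENNReal.inv_lt_top.2 hε) h)⟩
end
end

section
/- For every g ∈ F̃ there exist unique integers C₋(g), C₊(g) and a real number M > 0 such that g(γ) = γ + C₋(g) for all γ < −M and g(γ) = γ + C₊(g) for all γ > M. Moreover, the resulting maps C₋ : F̃ → ℤ and C₊ : F̃ → ℤ are group homomorphisms (C₋(g₁g₂) = C₋(g₁) + C₋(g₂) and C₊(g₁g₂) = C₊(g₁) + C₊(g₂)). -/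
noncomputable section

/-- `translationConsts g cm cp` says that `g` acts as the translation by the integer `cm`
near `-∞` and by the integer `cp` near `+∞`. -/
def translationConsts (g : ℝ → ℝ) (cm cp : ℤ) : Prop :=
  ∃ M : ℝ, 0 < M ∧ (∀ γ : ℝ, γ < -M → g γ = γ + cm) ∧ (∀ γ : ℝ, M < γ → g γ = γ + cp)

/-!
Agreeing with `x ↦ x + c` near `±∞` is an eventual equality along `atBot` or `atTop`, and
translations preserve both filters. Composing two such germs of translations, or inverting one,
therefore gives again a germ of a translation, so the permutations that are translations by
integers near both ends form a group. It contains `F̃`, because it contains the two generators.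
-/

section EventualTranslation

open Filter

variable {α : Type*} {l : Filter α}

lemma eventuallyEq_add_right_comp [AddSemigroup α] {f g : α → α} {a b : α}
    (hl : Tendsto (· + a) l l) (hf : f =ᶠ[l] (· + a)) (hg : g =ᶠ[l] (· + b)) :
    g ∘ f =ᶠ[l] (· + (a + b)) := by
  filter_upwards [hf, hl.eventually hg] with x hfx hgx
  rw [Function.comp_apply, hfx, hgx, add_assoc]

lemma perm_inv_eventuallyEq_add_right_neg [AddGroup α] {g : Equiv.Perm α} {a : α}
    (hl : Tendsto (· + -a) l l) (hg : g =ᶠ[l] (· + a)) : ⇑g⁻¹ =ᶠ[l] (· + -a) := by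
  filter_upwards [hl.eventually hg] with x hx
  rw [Equiv.Perm.inv_eq_iff_eq, hx, neg_add_cancel_right]

lemma eq_of_eventuallyEq_add_right [Add α] [IsLeftCancelAdd α] [l.NeBot] {f : α → α} {a b : α}
    (ha : f =ᶠ[l] (· + a)) (hb : f =ᶠ[l] (· + b)) : a = b := by
  obtain ⟨x, hx⟩ := (ha.symm.trans hb).exists
  exact add_left_cancel hx

lemma translationConsts_iff_eventuallyEq {g : ℝ → ℝ} {cm cp : ℤ} :
    translationConsts g cm cp ↔
      g =ᶠ[atBot] (· + (cm : ℝ)) ∧ g =ᶠ[atTop] (· + (cp : ℝ)) := by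
  constructor
  · rintro ⟨M, -, hbot, htop⟩
    exact ⟨(eventually_lt_atBot (-M)).mono hbot, (eventually_gt_atTop M).mono htop⟩
  · rintro ⟨hbot, htop⟩
    obtain ⟨m, hm⟩ := eventually_atBot.1 hbot
    obtain ⟨N, hN⟩ := eventually_atTop.1 htop
    refine ⟨max 1 (max (-m) N), by positivity, fun γ hγ => hm γ ?_, fun γ hγ => hN γ ?_⟩
    · have : -m ≤ max 1 (max (-m) N) := le_max_of_le_right (le_max_left _ _)
      linarith
    · exact (le_max_of_le_right (le_max_right _ _)).trans hγ.le

end EventualTranslation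

namespace translationConsts

open Filter

lemma comp {f g : ℝ → ℝ} {a b c d : ℤ} (hf : translationConsts f a b)
    (hg : translationConsts g c d) : translationConsts (g ∘ f) (a + c) (b + d) := by
  rw [translationConsts_iff_eventuallyEq] at hf hg ⊢
  push_cast
  exact ⟨eventuallyEq_add_right_comp (tendsto_atBot_add_const_right _ _ tendsto_id) hf.1 hg.1,
    eventuallyEq_add_right_comp (tendsto_atTop_add_const_right _ _ tendsto_id) hf.2 hg.2⟩

lemma inv {g : Equiv.Perm ℝ} {a b : ℤ} (hg : translationConsts g a b) :
    translationConsts ⇑g⁻¹ (-a) (-b) := by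
  rw [translationConsts_iff_eventuallyEq] at hg ⊢
  push_cast
  exact ⟨perm_inv_eventuallyEq_add_right_neg
      (tendsto_atBot_add_const_right _ _ tendsto_id) hg.1,
    perm_inv_eventuallyEq_add_right_neg
      (tendsto_atTop_add_const_right _ _ tendsto_id) hg.2⟩

lemma unique {g : ℝ → ℝ} {c d : ℤ × ℤ} (hc : translationConsts g c.1 c.2)
    (hd : translationConsts g d.1 d.2) : c = d := by
  rw [translationConsts_iff_eventuallyEq] at hc hd
  exact Prod.ext (Int.cast_injective (eq_of_eventuallyEq_add_right hc.1 hd.1))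
    (Int.cast_injective (eq_of_eventuallyEq_add_right hc.2 hd.2))

end translationConsts

lemma translationConsts_id : translationConsts id 0 0 :=
  ⟨1, one_pos, by simp, by simp⟩

lemma translationConsts_Atil : translationConsts Atil (-1) (-1) := by
  have hA (γ : ℝ) : Atil γ = γ + (-1 : ℤ) := by
    simp [Atil, sub_eq_add_neg]
  exact ⟨1, one_pos, fun γ _ => hA γ, fun γ _ => hA γ⟩

lemma Btil_of_nonpos {γ : ℝ} (hγ : γ ≤ 0) : Btil γ = γ :=
  if_pos hγ

lemma Btil_of_two_lt {γ : ℝ} (hγ : 2 < γ) : Btil γ = γ - 1 :=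
  (if_neg (by linarith)).trans (if_neg hγ.not_ge)

lemma translationConsts_Btil : translationConsts Btil 0 (-1) := by
  refine ⟨2, two_pos, fun γ hγ => ?_, fun γ hγ => ?_⟩
  · rw [Btil_of_nonpos (by linarith), Int.cast_zero, add_zero]
  · rw [Btil_of_two_lt hγ, Int.cast_neg, Int.cast_one, sub_eq_add_neg]

/-- The group of all permutations of `ℝ` that are translations by integers near `-∞` and
near `+∞`, the two integers being allowed to differ. No continuity or piecewise linearity in
between is imposed. It is the ambient group of `F̃` on which `C₋` and `C₊` are defined. -/
def eventualTranslations : Subgroup (Equiv.Perm ℝ) where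
  carrier := {g | ∃ c : ℤ × ℤ, translationConsts g c.1 c.2}
  one_mem' := ⟨0, translationConsts_id⟩
  mul_mem' := fun ⟨c, hc⟩ ⟨d, hd⟩ => ⟨d + c, hd.comp hc⟩
  inv_mem' := fun ⟨c, hc⟩ => ⟨-c, hc.inv⟩

lemma Ftil_le_eventualTranslations : Ftil ≤ eventualTranslations := by
  rw [Ftil, Subgroup.closure_le, Set.pair_subset_iff]
  exact ⟨⟨(-1, -1), translationConsts_Atil⟩, ⟨(0, -1), translationConsts_Btil⟩⟩

theorem translation_constants_exist_unique_and_additive_general :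
    (∀ g ∈ eventualTranslations, ∃! c : ℤ × ℤ, translationConsts g c.1 c.2) ∧
    (∀ (f g : ℝ → ℝ) (cm₁ cp₁ cm₂ cp₂ : ℤ),
      translationConsts f cm₁ cp₁ → translationConsts g cm₂ cp₂ →
      translationConsts (g ∘ f) (cm₁ + cm₂) (cp₁ + cp₂)) :=
  ⟨fun _ ⟨c, hc⟩ => ⟨c, hc, fun _ hd => hd.unique hc⟩, fun _ _ _ _ _ _ hf hg => hf.comp hg⟩

/-- Every `g ∈ F̃` is eventually a translation by unique integers `C₋(g)` (near `-∞`) and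
`C₊(g)` (near `+∞`); moreover `C₋` and `C₊` are additive along the group operation
`(g₁ g₂)(γ) = g₂(g₁(γ))` of `F̃`, i.e. they are homomorphisms `F̃ → ℤ`. -/
theorem translation_constants_exist_unique_and_additive :
    (∀ g : Equiv.Perm ℝ, g ∈ Ftil → ∃! c : ℤ × ℤ, translationConsts (⇑g) c.1 c.2) ∧
    (∀ g₁ g₂ : Equiv.Perm ℝ, g₁ ∈ Ftil → g₂ ∈ Ftil →
      ∀ cm₁ cp₁ cm₂ cp₂ : ℤ,
        translationConsts (⇑g₁) cm₁ cp₁ → translationConsts (⇑g₂) cm₂ cp₂ →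
        translationConsts (fun γ => g₂ (g₁ γ)) (cm₁ + cm₂) (cp₁ + cp₂)) := by
  obtain ⟨existsUnique, additive⟩ := translation_constants_exist_unique_and_additive_general
  exact ⟨fun g hg => existsUnique g (Ftil_le_eventualTranslations hg),
    fun g₁ g₂ _ _ => additive g₁ g₂⟩
end
end
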